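/- arXiv:1408.0109 — 2 statements merged into one kernel-verified Lean document; each statement's English description precedes it below -/
import Mathlib

section
/- Let G be a connected graph of order n ≥ 3 that is not isomorphic to the 5-cycle C5. If 2·γnt(G) = n + 1, then G is a subdivided star, i.e., G is isomorphic to the graph obtained from a star K_{1,k} for some k ≥ 1 by subdividing every edge exactly once. -/
open SimpleGraph

variable {V : Type*}

/-- The open neighborhood `N(S)` of a set `S` of vertices: all vertices having a neighbor in `S`. -/
def openNbhd (G : SimpleGraph V) (S : Set V) : Set V := {v | ∃ u ∈ S, G.Adj u v}

/-- `S` is a dominating set: every vertex not in `S` has a neighbor in `S`. -/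
def IsDomSet (G : SimpleGraph V) (S : Set V) : Prop := ∀ v ∉ S, ∃ u ∈ S, G.Adj u v

/-- `S` is a total dominating set: every vertex has a neighbor in `S`. -/
def IsTotalDomSet (G : SimpleGraph V) (S : Set V) : Prop := ∀ v, ∃ u ∈ S, G.Adj u v

/-- `S` is a neighborhood total dominating set: a dominating set such that the subgraph
induced by the open neighborhood `N(S)` has no isolated vertex. -/
def IsNTDSet (G : SimpleGraph V) (S : Set V) : Prop :=
  IsDomSet G S ∧ ∀ v ∈ openNbhd G S, ∃ u ∈ openNbhd G S, G.Adj v u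

/-- The domination number `γ(G)`. -/
noncomputable def domNum (G : SimpleGraph V) : ℕ :=
  sInf {n | ∃ S : Set V, IsDomSet G S ∧ S.ncard = n}

/-- The total domination number `γt(G)`. -/
noncomputable def totalDomNum (G : SimpleGraph V) : ℕ :=
  sInf {n | ∃ S : Set V, IsTotalDomSet G S ∧ S.ncard = n}

/-- The neighborhood total domination number `γnt(G)`. -/
noncomputable def ntdNum (G : SimpleGraph V) : ℕ :=
  sInf {n | ∃ S : Set V, IsNTDSet G S ∧ S.ncard = n}

/-- The subdivided star obtained from the star `K_{1,k}` by subdividing every edge exactly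
once: vertex `0` is the center, adjacent to `1, ..., k`, and each `i` (for `1 ≤ i ≤ k`) is
adjacent to the leaf `k + i`. It has order `2 * k + 1`. -/
def subdividedStar (k : ℕ) : SimpleGraph (Fin (2 * k + 1)) :=
  SimpleGraph.fromRel (fun a b =>
    (a.val = 0 ∧ 1 ≤ b.val ∧ b.val ≤ k) ∨ (1 ≤ a.val ∧ a.val ≤ k ∧ b.val = a.val + k))


namespace NTDProof

/-- Relative version of neighborhood total domination inside a vertex set `X`. -/
def NTD (G : SimpleGraph V) (X S : Finset V) : Prop :=
  S ⊆ X ∧ ∀ v ∈ X, v ∉ S → (∃ u ∈ S, G.Adj v u) ∧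
    ((∃ w ∈ X, w ∉ S ∧ G.Adj v w) ∨ ∃ u ∈ S, ∃ w ∈ S, G.Adj v u ∧ G.Adj u w)

/-- Cut version of connectedness of a vertex set. -/
def Conn (G : SimpleGraph V) (X : Finset V) : Prop :=
  X.Nonempty ∧ ∀ A ⊆ X, A.Nonempty → A ≠ X → ∃ a ∈ A, ∃ b ∈ X, b ∉ A ∧ G.Adj a b

variable [DecidableEq V] {G : SimpleGraph V}

/-- Spiders with `a` legs of length one and `b` legs of length two. -/
inductive Spider (G : SimpleGraph V) (c : V) : ℕ → ℕ → Finset V → Prop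
  | base : Spider G c 0 0 {c}
  | leaf {a b : ℕ} {X : Finset V} (z : V) : Spider G c a b X → z ∉ X → G.Adj c z →
      Spider G c (a + 1) b (insert z X)
  | leg {a b : ℕ} {X : Finset V} (x y : V) : Spider G c a b X → x ∉ X → y ∉ X → x ≠ y →
      G.Adj c x → G.Adj x y → Spider G c a (b + 1) (insert x (insert y X))

lemma NTD.union {X Y S T : Finset V} (h1 : NTD G X S) (h2 : NTD G Y T) (hd : Disjoint X Y) :
    NTD G (X ∪ Y) (S ∪ T) := by
  rw [Finset.disjoint_left] at hd
  obtain ⟨a1, b1⟩ := h1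
  obtain ⟨a2, b2⟩ := h2
  refine ⟨Finset.union_subset_union a1 a2, ?_⟩
  intro v hv hvs
  simp only [Finset.mem_union, not_or] at hv hvs
  rcases hv with hv | hv
  · obtain ⟨⟨u, hu, huv⟩, h⟩ := b1 v hv hvs.1
    refine ⟨⟨u, by simp [hu], huv⟩, ?_⟩
    rcases h with ⟨w, hw, hws, h⟩ | ⟨p, hp, w, hw, h⟩
    · refine Or.inl ⟨w, by simp [hw], ?_, h⟩
      have := hd hw
      have : w ∉ T := fun h => this (a2 h)
      simp [*]
    · exact Or.inr ⟨p, by simp [hp], w, by simp [hw], h⟩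
  · obtain ⟨⟨u, hu, huv⟩, h⟩ := b2 v hv hvs.2
    refine ⟨⟨u, by simp [hu], huv⟩, ?_⟩
    rcases h with ⟨w, hw, hws, h⟩ | ⟨p, hp, w, hw, h⟩
    · refine Or.inl ⟨w, by simp [hw], ?_, h⟩
      have : w ∉ S := fun h => hd (a1 h) hw
      simp [*]
    · exact Or.inr ⟨p, by simp [hp], w, by simp [hw], h⟩

lemma Spider.card {c : V} {a b : ℕ} {X : Finset V} (h : Spider G c a b X) :
    X.card = 1 + a + 2 * b := by
  induction h with
  | base => simp
  | leaf z _ hz _ ih => rw [Finset.card_insert_of_notMem hz]; omega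
  | leg x y _ hx hy hxy _ _ ih =>
    rw [Finset.card_insert_of_notMem (by simp [hx, hxy]), Finset.card_insert_of_notMem hy]; omega

lemma Spider.mem {c : V} {a b : ℕ} {X : Finset V} (h : Spider G c a b X) : c ∈ X := by
  induction h <;> simp [*]

/-- the center together with the middle vertices -/
lemma Spider.mids {c : V} {a b : ℕ} {X : Finset V} (h : Spider G c a b X) :
    ∃ S ⊆ X, c ∈ S ∧ S.card = 1 + b ∧ (1 ≤ b → ∃ u ∈ S, G.Adj c u) ∧
      ∀ w ∈ X, w ∉ S → G.Adj w c ∨ ∃ u ∈ S, G.Adj w u ∧ G.Adj u c := by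
  induction h with
  | base => exact ⟨{c}, by simp, by simp, by simp, by simp, by simp⟩
  | leaf z _ hz hcz ih =>
    obtain ⟨S, h1, h2, h3, h4, h5⟩ := ih
    refine ⟨S, h1.trans (Finset.subset_insert _ _), h2, h3, h4, ?_⟩
    intro w hw hws
    rcases Finset.mem_insert.1 hw with rfl | hw
    · exact Or.inl hcz.symm
    · exact h5 w hw hws
  | leg x y _ hx hy hxy hcx hxy' ih =>
    obtain ⟨S, h1, h2, h3, h4, h5⟩ := ih
    have hxS : x ∉ S := fun h => hx (h1 h)
    refine ⟨insert x S, ?_, by simp [h2], ?_, fun _ => ⟨x, by simp, hcx⟩, ?_⟩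
    · intro w hw
      rcases Finset.mem_insert.1 hw with rfl | hw
      · simp
      · simp [h1 hw]
    · rw [Finset.card_insert_of_notMem hxS, h3]; omega
    intro w hw hws
    simp only [Finset.mem_insert, not_or] at hw hws
    rcases hw with rfl | rfl | hw
    · exact absurd rfl hws.1
    · exact Or.inr ⟨x, by simp, hxy'.symm, hcx.symm⟩
    · rcases h5 w hw hws.2 with h | ⟨u, hu, h⟩
      · exact Or.inl h
      · exact Or.inr ⟨u, by simp [hu], h⟩

/-- the set of leaves of the legs -/
lemma Spider.tips {c : V} {a b : ℕ} {X : Finset V} (h : Spider G c a b X) (ha : a = 0) :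
    ∃ T ⊆ X, c ∉ T ∧ T.card = b ∧ (1 ≤ b → ∃ w ∈ X, w ∉ T ∧ G.Adj c w) ∧
      ∀ w ∈ X, w ∉ T → w ≠ c → G.Adj w c ∧ ∃ u ∈ T, G.Adj w u := by
  induction h with
  | base => exact ⟨∅, by simp, by simp, by simp, by simp, by simp⟩
  | leaf z _ hz hcz ih => omega
  | @leg a b X x y hs hx hy hxy hcx hxy' ih =>
    obtain ⟨T, h1, h2, h3, h4, h5⟩ := ih ha
    have hyT : y ∉ T := fun h => hy (h1 h)
    have hxT : x ∉ T := fun h => hx (h1 h)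
    have hcy : c ≠ y := fun h => hy (h ▸ hs.mem)
    refine ⟨insert y T, ?_, by simp [h2, hcy], ?_, fun _ => ⟨x, by simp, by simp [hxy, hxT], hcx⟩, ?_⟩
    · intro w hw
      rcases Finset.mem_insert.1 hw with rfl | hw
      · simp
      · simp [h1 hw]
    · rw [Finset.card_insert_of_notMem hyT, h3]
    intro w hw hws hwc
    simp only [Finset.mem_insert, not_or] at hw hws
    rcases hw with rfl | rfl | hw
    · exact ⟨hcx.symm, y, by simp, hxy'⟩
    · exact absurd rfl hws.1
    · obtain ⟨h, u, hu, h'⟩ := h5 w hw hws.2 hwc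
      exact ⟨h, u, by simp [hu], h'⟩

lemma insert_four (x y p q : V) (X : Finset V) :
    insert x (insert y (insert p (insert q X))) = insert p (insert q (insert x (insert y X))) := by
  ext; simp only [Finset.mem_insert]; tauto

lemma Spider.split {c : V} {a b : ℕ} {X : Finset V} (h : Spider G c a b X) (ha : a = 0)
    (u : V) (hu : u ∈ X) (huc : u ≠ c) :
    ∃ b' X' x y, b = b' + 1 ∧ Spider G c 0 b' X' ∧ X = insert x (insert y X') ∧ x ∉ X' ∧ y ∉ X' ∧
      x ≠ y ∧ G.Adj c x ∧ G.Adj x y ∧ (u = x ∨ u = y) := by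
  induction h with
  | base => simp at hu; exact absurd hu huc
  | leaf z _ hz hcz ih => omega
  | @leg a b X x y hs hx hy hxy hcx hxy' ih =>
    subst ha
    by_cases hux : u = x ∨ u = y
    · exact ⟨b, X, x, y, rfl, hs, rfl, hx, hy, hxy, hcx, hxy', hux⟩
    push Not at hux
    have huX : u ∈ X := by simpa [hux.1, hux.2] using hu
    obtain ⟨b', X', x', y', rfl, hs', rfl, k1, k2, k3, k4, k5, k6⟩ := ih rfl huX
    simp only [Finset.mem_insert, not_or] at hx hy
    refine ⟨b' + 1, insert x (insert y X'), x', y', rfl, hs'.leg x y hx.2.2 hy.2.2 hxy hcx hxy', ?_,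
      ?_, ?_, k3, k4, k5, k6⟩
    · exact insert_four _ _ _ _ _
    · simp [k1, Ne.symm hx.1, Ne.symm hy.1]
    · simp [k2, Ne.symm hx.2.1, Ne.symm hy.2.1]

/-- A subdivided star attached to a vertex of an NTD-set costs only `k`. -/
lemma Spider.attach {c : V} {k : ℕ} {X Y S : Finset V} (h : Spider G c 0 k X) (hk : 1 ≤ k)
    {u v : V} (hu : u ∈ X) (huv : G.Adj v u) (hY : NTD G Y S) (hv : v ∈ S) (hd : Disjoint X Y) :
    ∃ T, NTD G (X ∪ Y) T ∧ T.card ≤ k + S.card ∧ S ⊆ T := by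
  rw [Finset.disjoint_left] at hd
  obtain ⟨hYS, hY⟩ := hY
  have hXS : ∀ w ∈ X, w ∉ S := fun w hw h => hd hw (hYS h)
  -- it suffices to treat vertices of `X`
  have key : ∀ T ⊆ X, (∀ w ∈ X, w ∉ T → (∃ p ∈ T ∪ S, G.Adj w p) ∧
      ((∃ q ∈ X, q ∉ T ∧ G.Adj w q) ∨ ∃ p ∈ T ∪ S, ∃ q ∈ T ∪ S, G.Adj w p ∧ G.Adj p q)) →
      NTD G (X ∪ Y) (T ∪ S) := by
    intro T hT hTX
    refine ⟨Finset.union_subset_union hT hYS, ?_⟩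
    intro w hw hws
    simp only [Finset.mem_union, not_or] at hw hws
    rcases hw with hw | hw
    · obtain ⟨h1, h2⟩ := hTX w hw hws.1
      refine ⟨h1, h2.imp ?_ id⟩
      rintro ⟨q, hq, hqT, hq'⟩
      exact ⟨q, by simp [hq], by simp [hqT, hXS q hq], hq'⟩
    · obtain ⟨⟨p, hp, hp'⟩, h2⟩ := hY w hw hws.2
      refine ⟨⟨p, by simp [hp], hp'⟩, h2.imp ?_ ?_⟩
      · rintro ⟨q, hq, hqT, hq'⟩
        have hqT' : q ∉ T := fun h => hd (hT h) hq
        exact ⟨q, by simp [hq], by simp [hqT, hqT'], hq'⟩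
      · rintro ⟨q, hq, r, hr, h⟩
        exact ⟨q, by simp [hq], r, by simp [hr], h⟩
  suffices ∃ T ⊆ X, T.card ≤ k ∧ NTD G (X ∪ Y) (T ∪ S) by
    obtain ⟨T, _, hT, h⟩ := this
    exact ⟨T ∪ S, h, (Finset.card_union_le _ _).trans (by omega), Finset.subset_union_right⟩
  by_cases huc : u = c
  · subst huc
    obtain ⟨T, h1, h2, h3, h4, h5⟩ := h.tips rfl
    refine ⟨T, h1, h3.le, key T h1 ?_⟩
    intro w hw hwT
    by_cases hwu : w = u
    · subst hwu
      exact ⟨⟨v, by simp [hv], huv.symm⟩, Or.inl (h4 hk)⟩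
    · obtain ⟨h6, p, hp, h7⟩ := h5 w hw hwT hwu
      exact ⟨⟨p, by simp [hp], h7⟩, Or.inl ⟨u, hu, h2, h6⟩⟩
  · obtain ⟨k', X', x, y, rfl, hs, rfl, k1, k2, k3, k4, k5, k6⟩ := h.split rfl u hu huc
    rcases k6 with rfl | rfl
    · obtain ⟨T, h1, h2, h3, h4, h5⟩ := hs.tips rfl
      have hTX : insert u T ⊆ insert u (insert y X') := by
        intro w hw
        rcases Finset.mem_insert.1 hw with rfl | hw
        · simp
        · simp [h1 hw]
      refine ⟨insert u T, hTX, (Finset.card_insert_le _ _).trans (by omega), key _ hTX ?_⟩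
      intro w hw hwT
      have huT : u ∈ insert u T ∪ S := by simp
      have hvT : v ∈ insert u T ∪ S := by simp [hv]
      simp only [Finset.mem_insert, not_or] at hw hwT
      rcases hw with rfl | rfl | hw
      · exact absurd rfl hwT.1
      · exact ⟨⟨u, huT, k5.symm⟩, Or.inr ⟨u, huT, v, hvT, k5.symm, huv.symm⟩⟩
      · by_cases hwc : w = c
        · subst hwc
          exact ⟨⟨u, huT, k4⟩, Or.inr ⟨u, huT, v, hvT, k4, huv.symm⟩⟩
        · obtain ⟨h6, p, hp, h7⟩ := h5 w hw hwT.2 hwc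
          refine ⟨⟨p, by simp [hp], h7⟩, Or.inl ⟨c, by simp [hs.mem], ?_, h6⟩⟩
          simp [h2, Ne.symm huc]
    · obtain ⟨T, h1, h2, h3, h4, h5⟩ := hs.mids
      have hTX : T ⊆ insert x (insert u X') := fun w hw => by simp [h1 hw]
      have huT : u ∉ T := fun h => k2 (h1 h)
      have hxT : x ∉ T := fun h => k1 (h1 h)
      refine ⟨T, hTX, by omega, key _ hTX ?_⟩
      intro w hw hwT
      simp only [Finset.mem_insert] at hw
      rcases hw with rfl | rfl | hw
      · exact ⟨⟨c, by simp [h2], k4.symm⟩, Or.inl ⟨u, by simp, huT, k5⟩⟩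
      · exact ⟨⟨v, by simp [hv], huv.symm⟩, Or.inl ⟨x, by simp, hxT, k5.symm⟩⟩
      · rcases h5 w hw hwT with h6 | ⟨p, hp, h6, h7⟩
        · have hb : 1 ≤ k' := by
            by_contra hb
            have := hs.card
            have hX' : X'.card = 1 := by omega
            obtain ⟨q, rfl⟩ := Finset.card_eq_one.1 hX'
            have := hs.mem
            simp at this hw
            exact h6.ne (hw.trans this.symm)
          obtain ⟨q, hq, hq'⟩ := h4 hb
          exact ⟨⟨c, by simp [h2], h6⟩, Or.inr ⟨c, by simp [h2], q, by simp [hq], h6, hq'⟩⟩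
        · exact ⟨⟨p, by simp [hp], h6⟩, Or.inr ⟨p, by simp [hp], c, by simp [h2], h6, h7⟩⟩

/-- NTD-set in a spider, containing the center. -/
lemma Spider.ntd {c : V} {a b : ℕ} {X : Finset V} (h : Spider G c a b X) (hX : 3 ≤ X.card) :
    ∃ S, NTD G X S ∧ c ∈ S ∧ S.card ≤ max (1 + b) 2 := by
  obtain ⟨S, h1, h2, h3, h4, h5⟩ := h.mids
  rcases Nat.eq_zero_or_pos b with rfl | hb
  · -- a star
    have hSc : S = {c} := by
      obtain ⟨q, rfl⟩ := Finset.card_eq_one.1 h3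
      simp at h2; rw [h2]
    subst hSc
    have hadj : ∀ w ∈ X, w ≠ c → G.Adj w c := by
      intro w hw hwc
      rcases h5 w hw (by simpa using hwc) with h | ⟨u, hu, h6, h'⟩
      · exact h
      · simp at hu; subst hu; exact h6
    obtain ⟨z, hz, hzc⟩ : ∃ z ∈ X, z ≠ c := Finset.exists_mem_ne (by omega) c
    refine ⟨{c, z}, ⟨?_, ?_⟩, by simp, ?_⟩
    · intro w hw; simp at hw; rcases hw with rfl | rfl
      · exact h.mem
      · exact hz
    · intro w hw hwS
      simp at hwS
      have := hadj w hw hwS.1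
      exact ⟨⟨c, by simp, this⟩, Or.inr ⟨c, by simp, z, by simp, this, (hadj z hz hzc).symm⟩⟩
    · exact (Finset.card_le_two).trans (by omega)
  · obtain ⟨q, hq, hq'⟩ := h4 hb
    refine ⟨S, ⟨h1, ?_⟩, h2, by omega⟩
    intro w hw hwS
    rcases h5 w hw hwS with h | ⟨u, hu, h, h'⟩
    · exact ⟨⟨c, h2, h⟩, Or.inr ⟨c, h2, q, hq, h, hq'⟩⟩
    · exact ⟨⟨u, hu, h⟩, Or.inr ⟨u, hu, c, h2, h, h'⟩⟩

lemma Conn.union {X Y : Finset V} (hX : Conn G X) (hY : Conn G Y) {x y : V} (hx : x ∈ X) (hy : y ∈ Y)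
    (hxy : G.Adj x y) : Conn G (X ∪ Y) := by
  refine ⟨hX.1.mono Finset.subset_union_left, ?_⟩
  intro A hA hne hneq
  by_contra hcon
  push Not at hcon
  have hcl : ∀ a ∈ A, ∀ b ∈ X ∪ Y, G.Adj a b → b ∈ A := by
    intro a ha b hb hab
    by_contra hbA
    exact hcon a ha b hb hbA hab
  have step : ∀ Z, Conn G Z → Z ⊆ X ∪ Y → (∃ a ∈ A, a ∈ Z) → Z ⊆ A := by
    intro Z hZ hZs ⟨a, ha, haZ⟩
    by_contra hn
    obtain ⟨p, hp, q, hq, hqA, hpq⟩ := hZ.2 (A ∩ Z) Finset.inter_subset_right ⟨a, by simp [ha, haZ]⟩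
      (fun h => hn (by rw [← h]; exact Finset.inter_subset_left))
    simp only [Finset.mem_inter] at hp hqA
    exact hqA ⟨hcl p hp.1 q (hZs hq) hpq, hq⟩
  apply hneq
  apply hA.antisymm
  have hsX := step X hX Finset.subset_union_left
  have hsY := step Y hY Finset.subset_union_right
  have e1 : X ⊆ A → Y ⊆ A := fun h => hsY ⟨y, hcl x (h hx) y (by simp [hy]) hxy, hy⟩
  have e2 : Y ⊆ A → X ⊆ A := fun h => hsX ⟨x, hcl y (h hy) x (by simp [hx]) hxy.symm, hx⟩
  obtain ⟨a, ha⟩ := hne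
  rcases Finset.mem_union.1 (hA ha) with h | h
  · have := hsX ⟨a, ha, h⟩
    exact Finset.union_subset this (e1 this)
  · have := hsY ⟨a, ha, h⟩
    exact Finset.union_subset (e2 this) this

/-- A connected component of a nonempty set. -/
lemma exists_comp (Y : Finset V) (hY : Y.Nonempty) :
    ∃ D ⊆ Y, Conn G D ∧ ∀ a ∈ D, ∀ b ∈ Y, G.Adj a b → b ∈ D := by
  induction Y using Finset.strongInduction with
  | H Y ih =>
    by_cases hc : Conn G Y
    · exact ⟨Y, subset_rfl, hc, fun _ _ _ hb _ => hb⟩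
    unfold Conn at hc
    push Not at hc
    obtain ⟨A, hA, hne, hneq, hcl⟩ := hc hY
    obtain ⟨D, hD, hDc, hDcl⟩ := ih A (hA.ssubset_of_ne hneq) hne
    refine ⟨D, hD.trans hA, hDc, ?_⟩
    intro a ha b hb hab
    apply hDcl a ha b _ hab
    by_contra hbA
    exact hcl a (hD ha) b hb hbA hab

/-- Removing a component of `X - v`. -/
lemma Conn.remove {X : Finset V} (hX : Conn G X) {v : V} (hv : v ∈ X) (hne : X ≠ {v}) :
    ∃ D ⊆ X, v ∉ D ∧ Conn G D ∧ Conn G (X \ D) ∧ ∃ u ∈ D, G.Adj v u := by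
  obtain ⟨D, hD, hDc, hcl⟩ := exists_comp (G := G) (X.erase v) (by
    rw [Finset.nonempty_iff_ne_empty]
    intro h
    rw [Finset.erase_eq_empty_iff] at h
    rcases h with h | h
    · simp [h] at hv
    · exact hne h)
  have hvD : v ∉ D := fun h => by simpa using hD h
  have hDX : D ⊆ X := hD.trans (Finset.erase_subset _ _)
  refine ⟨D, hDX, hvD, hDc, ⟨⟨v, by simp [hv, hvD]⟩, ?_⟩, ?_⟩
  · intro A hA hAne hAneq
    have hAX : ∀ a ∈ A, a ∈ X ∧ a ∉ D := fun a ha => by simpa using hA ha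
    by_cases hvA : v ∈ A
    · obtain ⟨a, ha, b, hb, hbA, hab⟩ := hX.2 (A ∪ D)
        (Finset.union_subset (hA.trans Finset.sdiff_subset) hDX) ⟨v, by simp [hvA]⟩ (by
          rintro rfl
          apply hAneq
          apply hA.antisymm
          intro w hw
          simp at hw
          tauto)
      simp only [Finset.mem_union, not_or] at ha hbA
      rcases ha with ha | ha
      · exact ⟨a, ha, b, by simp [hb, hbA.2], hbA.1, hab⟩
      · have hbv : b ≠ v := by rintro rfl; exact hbA.1 hvA
        exact absurd (hcl a ha b (by simp [hb, hbv]) hab) hbA.2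
    · obtain ⟨a, ha, b, hb, hbA, hab⟩ := hX.2 A (hA.trans Finset.sdiff_subset) hAne (by
        rintro rfl; exact hvA hv)
      refine ⟨a, ha, b, ?_, hbA, hab⟩
      simp only [Finset.mem_sdiff, hb, true_and]
      intro hbD
      have hav : a ≠ v := by rintro rfl; exact hvA ha
      exact (hAX a ha).2 (hcl b hbD a (by simp [hav, (hAX a ha).1]) hab.symm)
  · obtain ⟨a, ha, b, hb, hbA, hab⟩ := hX.2 D hDX hDc.1 (by rintro rfl; exact hvD hv)
    have : b = v := by
      by_contra hbv
      exact hbA (hcl a ha b (by simp [hb, hbv]) hab)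
    subst this
    exact ⟨a, ha, hab.symm⟩

/-- Adding a connected set with at most two vertices to a spider. -/
lemma Spider.add {c : V} {a b : ℕ} {X D : Finset V} (h : Spider G c a b X) (hD : Conn G D)
    (hc : D.card ≤ 2) (hd : ∀ w ∈ D, w ∉ X) {u : V} (hu : u ∈ D) (hcu : G.Adj c u) :
    ∃ a b, Spider G c a b (D ∪ X) := by
  by_cases h1 : D = {u}
  · subst h1
    exact ⟨a + 1, b, h.leaf u (hd u hu) hcu⟩
  · obtain ⟨p, hp, y, hy, hyu, hpy⟩ := hD.2 {u} (by simpa using hu) (by simp) (fun h => h1 h.symm)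
    simp at hp hyu
    subst hp
    have hDe : D = {p, y} := by
      symm
      apply Finset.eq_of_subset_of_card_le
      · intro w hw; simp at hw; rcases hw with rfl | rfl <;> assumption
      · rw [Finset.card_pair (Ne.symm hyu)]; exact hc
    subst hDe
    refine ⟨a, b + 1, ?_⟩
    have := h.leg p y (hd p hu) (hd y hy) (Ne.symm hyu) hcu hpy
    convert this using 1
    ext; simp

lemma spider_or {X : Finset V} (hX : Conn G X) {v : V} (hv : v ∈ X) :
    (∃ a b, Spider G v a b X) ∨
      ∃ D ⊆ X, v ∉ D ∧ 3 ≤ D.card ∧ Conn G D ∧ Conn G (X \ D) ∧ ∃ u ∈ D, G.Adj v u := by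
  induction X using Finset.strongInduction with
  | H X ih =>
    by_cases h1 : X = {v}
    · subst h1; exact Or.inl ⟨0, 0, Spider.base⟩
    obtain ⟨D, hDX, hvD, hDc, hXD, u, hu, hvu⟩ := hX.remove hv h1
    by_cases h3 : 3 ≤ D.card
    · exact Or.inr ⟨D, hDX, hvD, h3, hDc, hXD, u, hu, hvu⟩
    rcases ih (X \ D) (Finset.sdiff_ssubset hDX hDc.1) hXD (by simp [hv, hvD]) with
      ⟨a, b, hs⟩ | ⟨D', hD', hvD', hc', hDc', hXD', u', hu', hvu'⟩
    · left
      have := hs.add hDc (by omega) (by simp; tauto) hu hvu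
      rwa [Finset.union_sdiff_of_subset hDX] at this
    · right
      refine ⟨D', hD'.trans Finset.sdiff_subset, hvD', hc', hDc', ?_, u', hu', hvu'⟩
      have := hXD'.union hDc (x := v) (y := u) (by simp [hv, hvD, hvD']) hu hvu
      convert this using 1
      ext w
      have := fun h => Finset.mem_sdiff.1 (@hD' w h)
      have := @hDX w
      simp only [Finset.mem_union, Finset.mem_sdiff]
      tauto

/-- Either a spider or a cut into two large connected sets. -/
lemma spider_or_cut {X : Finset V} (hX : Conn G X) :
    (∃ v a b, Spider G v a b X) ∨
      ∃ D ⊆ X, 3 ≤ D.card ∧ 3 ≤ (X \ D).card ∧ Conn G D ∧ Conn G (X \ D) := by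
  obtain ⟨v, hv⟩ := hX.1
  rcases spider_or hX hv with ⟨a, b, h⟩ | ⟨D, hD, -, h3, hDc, hXD, -⟩
  · exact Or.inl ⟨v, a, b, h⟩
  clear hv v
  induction D using Finset.strongInduction with
  | H D ih =>
    by_cases h4 : 3 ≤ (X \ D).card
    · exact Or.inr ⟨D, hD, h3, h4, hDc, hXD⟩
    obtain ⟨x, hx, w, hw, hwD, hxw⟩ := hX.2 D hD hDc.1 (by
      rintro rfl
      simpa using hXD.1)
    have hw' : w ∈ X \ D := by simp [hw, hwD]
    rcases spider_or hDc hx with ⟨a, b, h⟩ | ⟨D', hD', hxD', h3', hDc', hXD', -⟩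
    · left
      obtain ⟨a, b, h⟩ := h.add hXD (by omega) (by simp) hw' hxw
      rw [Finset.sdiff_union_of_subset hD] at h
      exact ⟨x, a, b, h⟩
    · apply ih D' (hD'.ssubset_of_ne (by rintro rfl; exact hxD' hx)) (hD'.trans hD) h3' hDc'
      have := hXD'.union hXD (x := x) (y := w) (by simp [hx, hxD']) hw' hxw
      convert this using 1
      ext w
      have := @hD' w
      have := @hD w
      simp only [Finset.mem_union, Finset.mem_sdiff]
      tauto

lemma main_aux (n : ℕ) : ∀ X : Finset V, X.card = n → n ≠ 2 → Conn G X →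
    (∀ v ∈ X, ∃ S, NTD G X S ∧ v ∈ S ∧ 2 * S.card ≤ n + 1) ∧
    (3 ≤ n → (∃ S, NTD G X S ∧ 2 * S.card ≤ n) ∨ ∃ c k, Spider G c 0 k X) := by
  induction n using Nat.strong_induction_on with
  | _ n ih =>
    intro X hXn hn2 hX
    constructor
    · intro v hv
      by_cases hn1 : n = 1
      · subst hn1
        obtain ⟨q, rfl⟩ := Finset.card_eq_one.1 hXn
        simp at hv; subst hv
        exact ⟨{v}, ⟨by simp, by simp⟩, by simp, by simp⟩
      have hnpos : 0 < n := hXn ▸ Finset.card_pos.2 ⟨v, hv⟩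
      rcases spider_or hX hv with ⟨a, b, h⟩ | ⟨D, hD, hvD, h3, hDc, hXD, u, hu, hvu⟩
      · obtain ⟨S, h1, h2, h3⟩ := h.ntd (by omega)
        have := h.card
        exact ⟨S, h1, h2, by omega⟩
      have hcard : (X \ D).card + D.card = n := by
        rw [Finset.card_sdiff_add_card_eq_card hD, hXn]
      have hvR : v ∈ X \ D := by simp [hv, hvD]
      have hRpos : 0 < (X \ D).card := Finset.card_pos.2 ⟨v, hvR⟩
      obtain ⟨ihA, ihB⟩ := ih D.card (by omega) D rfl (by omega) hDc
      have hun : D ∪ (X \ D) = X := Finset.union_sdiff_of_subset hD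
      have hdis : Disjoint D (X \ D) := Finset.disjoint_sdiff
      by_cases hR : (X \ D).card = 2
      · obtain ⟨S, h1, h2, h4⟩ := ihA u hu
        have hvS : v ∉ S := fun h => hvD (h1.1 h)
        refine ⟨insert v S, ⟨?_, ?_⟩, by simp, ?_⟩
        · intro w hw
          rcases Finset.mem_insert.1 hw with rfl | hw
          · exact hv
          · exact hD (h1.1 hw)
        · intro w hw hwS
          simp only [Finset.mem_insert, not_or] at hwS
          by_cases hwD : w ∈ D
          · obtain ⟨⟨p, hp, hp'⟩, h5⟩ := h1.2 w hwD hwS.2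
            refine ⟨⟨p, by simp [hp], hp'⟩, h5.imp ?_ ?_⟩
            · rintro ⟨q, hq, hq1, hq2⟩
              have : q ≠ v := by rintro rfl; exact hvD hq
              exact ⟨q, hD hq, by simp [hq1, this], hq2⟩
            · rintro ⟨p, hp, q, hq, h⟩
              exact ⟨p, by simp [hp], q, by simp [hq], h⟩
          · have hRe : X \ D = {v, w} := by
              symm
              apply Finset.eq_of_subset_of_card_le
              · intro t ht; simp at ht; rcases ht with rfl | rfl <;> simp [*]
              · rw [Finset.card_pair (Ne.symm hwS.1), hR]
            obtain ⟨p, hp, q, hq, hq', hpq⟩ := hXD.2 {v} (by simp [hv, hvD]) (by simp) (by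
              intro h; rw [← h] at hR; simp at hR)
            rw [hRe] at hq
            simp at hp hq hq'
            subst hp
            obtain rfl : q = w := by tauto
            exact ⟨⟨p, by simp, hpq.symm⟩, Or.inr ⟨p, by simp, u, by simp [h2], hpq.symm, hvu⟩⟩
        · rw [Finset.card_insert_of_notMem hvS]; omega
      · have hDpos : 0 < D.card := by omega
        obtain ⟨ihA', -⟩ := ih (X \ D).card (by omega) (X \ D) rfl hR hXD
        obtain ⟨S, h1, h2, h4⟩ := ihA' v hvR
        rcases ihB h3 with ⟨T, hT, hT'⟩ | ⟨c, k, hs⟩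
        · refine ⟨T ∪ S, ?_, by simp [h2], ?_⟩
          · have := hT.union h1 hdis
            rwa [hun] at this
          · have := Finset.card_union_le T S
            omega
        · have := hs.card
          obtain ⟨T, hT, hT', hST⟩ := hs.attach (by omega) hu hvu h1 h2 hdis
          rw [hun] at hT
          exact ⟨T, hT, hST h2, by omega⟩
    · intro hn3
      rcases spider_or_cut hX with ⟨v, a, b, h⟩ | ⟨D, hD, h3, h3', hDc, hXD⟩
      · have hc := h.card
        by_cases ha : a = 0
        · subst ha; exact Or.inr ⟨v, b, h⟩
        by_cases hn4 : 4 ≤ n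
        · obtain ⟨S, h1, h2, h3⟩ := h.ntd (by omega)
          exact Or.inl ⟨S, h1, by omega⟩
        · -- a path on three vertices
          right
          obtain rfl : a = 2 := by omega
          obtain rfl : b = 0 := by omega
          cases h with
          | leaf z h hz hcz =>
            cases h with
            | leaf y h hy hcy =>
              cases h with
              | base =>
                refine ⟨z, 1, ?_⟩
                simp at hz hy
                have := (Spider.base (G := G) (c := z)).leg v y (by simpa using hcz.ne)
                  (by simpa using Ne.symm hz.1) hcy.ne hcz.symm hcy
                convert this using 1
                ext; simp; tauto
      have hcard : (X \ D).card + D.card = n := by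
        rw [Finset.card_sdiff_add_card_eq_card hD, hXn]
      have hun : D ∪ (X \ D) = X := Finset.union_sdiff_of_subset hD
      have hdis : Disjoint D (X \ D) := Finset.disjoint_sdiff
      obtain ⟨A1, B1⟩ := ih D.card (by omega) D rfl (by omega) hDc
      obtain ⟨A2, B2⟩ := ih (X \ D).card (by omega) (X \ D) rfl (by omega) hXD
      obtain ⟨p, hp, q, hq, hqD, hpq⟩ := hX.2 D hD hDc.1 (by
        rintro rfl
        simpa using hXD.1)
      have hq' : q ∈ X \ D := by simp [hq, hqD]
      left
      rcases B1 h3 with ⟨S, hS, hS'⟩ | ⟨c, k, hs⟩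
      · rcases B2 h3' with ⟨T, hT, hT'⟩ | ⟨c, k, hs⟩
        · refine ⟨S ∪ T, ?_, ?_⟩
          · have := hS.union hT hdis
            rwa [hun] at this
          · have := Finset.card_union_le S T
            omega
        · obtain ⟨S, h1, h2, h4⟩ := A1 p hp
          have := hs.card
          obtain ⟨T, hT, hT', hST⟩ := hs.attach (by omega) hq' hpq h1 h2 hdis.symm
          rw [Finset.union_comm, hun] at hT
          exact ⟨T, hT, by omega⟩
      · obtain ⟨S, h1, h2, h4⟩ := A2 q hq'
        have := hs.card
        obtain ⟨T, hT, hT', hST⟩ := hs.attach (by omega) hp hpq.symm h1 h2 hdis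
        rw [hun] at hT
        exact ⟨T, hT, by omega⟩


/-- Explicit labelling of a spanning subdivided star. -/
structure Lab (G : SimpleGraph V) (c : V) (k : ℕ) (x y : ℕ → V) (X : Finset V) : Prop where
  cx : ∀ i < k, G.Adj c (x i)
  xy : ∀ i < k, G.Adj (x i) (y i)
  xinj : ∀ i < k, ∀ j < k, x i = x j → i = j
  yinj : ∀ i < k, ∀ j < k, y i = y j → i = j
  xney : ∀ i < k, ∀ j < k, x i ≠ y j
  cney : ∀ i < k, c ≠ y i
  mem : ∀ w, w ∈ X ↔ w = c ∨ ∃ i < k, w = x i ∨ w = y i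

lemma Spider.label {c : V} {a k : ℕ} {X : Finset V} (h : Spider G c a k X) (ha : a = 0) :
    ∃ x y, Lab G c k x y X := by
  induction h with
  | base => exact ⟨fun _ => c, fun _ => c, by constructor <;> simp⟩
  | leaf z _ hz hcz ih => omega
  | @leg a b X p q hs hp hq hpq hcp hpq' ih =>
    obtain ⟨x, y, h⟩ := ih ha
    have hcX := hs.mem
    have hx : ∀ i < b, x i ∈ X := fun i hi => (h.mem _).2 (Or.inr ⟨i, hi, Or.inl rfl⟩)
    have hy : ∀ i < b, y i ∈ X := fun i hi => (h.mem _).2 (Or.inr ⟨i, hi, Or.inr rfl⟩)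
    obtain ⟨h1, h2, h3, h4, h5, h6, h7⟩ := h
    refine ⟨fun i => if i = b then p else x i, fun i => if i = b then q else y i, ?_⟩
    constructor
    · grind
    · grind
    · grind
    · grind
    · grind
    · grind
    · intro w
      simp only [Finset.mem_insert, h7]
      constructor
      · rintro (rfl | rfl | rfl | ⟨i, hi, h⟩)
        · exact Or.inr ⟨b, by omega, by simp⟩
        · exact Or.inr ⟨b, by omega, by simp⟩
        · simp
        · exact Or.inr ⟨i, by omega, by simpa [hi.ne] using h⟩
      · rintro (rfl | ⟨i, hi, h⟩)
        · simp
        · by_cases hib : i = b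
          · simp [hib] at h; tauto
          · simp [hib] at h
            exact Or.inr (Or.inr (Or.inr ⟨i, by omega, h⟩))

section
variable {c : V} {k : ℕ} {x y : ℕ → V} {X : Finset V}

lemma Lab.cy (L : Lab G c k x y X) (hm : ∀ S, NTD G X S → k < S.card) {i : ℕ} (hi : i < k) :
    ¬ G.Adj c (y i) := by
  intro hadj
  obtain ⟨h1, h2, h3, h4, h5, h6, h7⟩ := L
  have := hm (insert c (((Finset.range k).erase i).image x)) ⟨?_, ?_⟩
  · have e1 := Finset.card_insert_le c (((Finset.range k).erase i).image x)
    have e2 := Finset.card_image_le (s := (Finset.range k).erase i) (f := x)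
    rw [Finset.card_erase_of_mem (by simpa using hi), Finset.card_range] at e2
    omega
  · intro w hw
    simp at hw
    rw [h7]
    grind
  · intro w hw hws
    simp only [Finset.mem_insert, Finset.mem_image, Finset.mem_erase, Finset.mem_range, not_or,
      not_exists, not_and] at hws
    rcases (h7 w).1 hw with rfl | ⟨l, hl, rfl | rfl⟩
    · exact absurd rfl hws.1
    · obtain rfl : l = i := by grind
      refine ⟨⟨c, by simp, (h1 l hl).symm⟩, Or.inl ⟨y l, ?_, ?_, h2 l hl⟩⟩
      · rw [h7]; grind
      · simp; grind
    · by_cases hli : l = i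
      · subst hli
        refine ⟨⟨c, by simp, hadj.symm⟩, Or.inl ⟨x l, ?_, ?_, (h2 l hl).symm⟩⟩
        · rw [h7]; grind
        · have := (h1 l hl).ne
          simp; grind
      · have hm : x l ∈ insert c (((Finset.range k).erase i).image x) := by simp; grind
        exact ⟨⟨x l, hm, (h2 l hl).symm⟩, Or.inr ⟨x l, hm, c, by simp, (h2 l hl).symm, (h1 l hl).symm⟩⟩

lemma Lab.xy' (L : Lab G c k x y X) (hm : ∀ S, NTD G X S → k < S.card) {i j : ℕ} (hi : i < k)
    (hj : j < k) (hij : i ≠ j) : ¬ G.Adj (x i) (y j) := by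
  intro hadj
  obtain ⟨h1, h2, h3, h4, h5, h6, h7⟩ := L
  have hxm : ∀ l < k, l ≠ j → x l ∈ insert c (((Finset.range k).erase j).image x) := by
    intro l hl hlj
    simp; grind
  have := hm (insert c (((Finset.range k).erase j).image x)) ⟨?_, ?_⟩
  · have e1 := Finset.card_insert_le c (((Finset.range k).erase j).image x)
    have e2 := Finset.card_image_le (s := (Finset.range k).erase j) (f := x)
    rw [Finset.card_erase_of_mem (by simpa using hj), Finset.card_range] at e2
    omega
  · intro w hw
    simp at hw
    rw [h7]
    grind
  · intro w hw hws
    have hxi := hxm i hi hij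
    have hc : c ∈ insert c (((Finset.range k).erase j).image x) := by simp
    rcases (h7 w).1 hw with rfl | ⟨l, hl, rfl | rfl⟩
    · simp at hws
    · obtain rfl : l = j := by
        by_contra hlj
        exact hws (hxm l hl hlj)
      exact ⟨⟨c, hc, (h1 l hl).symm⟩, Or.inr ⟨c, hc, x i, hxi, (h1 l hl).symm, h1 i hi⟩⟩
    · by_cases hlj : l = j
      · subst hlj
        exact ⟨⟨x i, hxi, hadj.symm⟩, Or.inr ⟨x i, hxi, c, hc, hadj.symm, (h1 i hi).symm⟩⟩
      · exact ⟨⟨x l, hxm l hl hlj, (h2 l hl).symm⟩,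
          Or.inr ⟨x l, hxm l hl hlj, c, hc, (h2 l hl).symm, (h1 l hl).symm⟩⟩

lemma card_erase2 (f : ℕ → V) (p q : V) {i j : ℕ} (hi : i < k) (hj : j < k) (hij : i ≠ j) :
    (insert p (insert q ((((Finset.range k).erase i).erase j).image f))).card ≤ k := by
  have e0 := Finset.card_insert_le q ((((Finset.range k).erase i).erase j).image f)
  have e1 := Finset.card_insert_le p (insert q ((((Finset.range k).erase i).erase j).image f))
  have e2 := Finset.card_image_le (s := ((Finset.range k).erase i).erase j) (f := f)
  rw [Finset.card_erase_of_mem (by simp [hj, Ne.symm hij]),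
    Finset.card_erase_of_mem (by simpa using hi), Finset.card_range] at e2
  omega

lemma Lab.xx (L : Lab G c k x y X) (hm : ∀ S, NTD G X S → k < S.card) {i j : ℕ} (hi : i < k)
    (hj : j < k) : ¬ G.Adj (x i) (x j) := by
  intro hadj
  have hij : i ≠ j := by rintro rfl; exact G.loopless.irrefl _ hadj
  have hcard := card_erase2 y (x i) (x j) hi hj hij
  set S := insert (x i) (insert (x j) ((((Finset.range k).erase i).erase j).image y)) with hS
  obtain ⟨h1, h2, h3, h4, h5, h6, h7⟩ := L
  have hxi : x i ∈ S := by simp [hS]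
  have hxj : x j ∈ S := by simp [hS]
  have hym : ∀ l < k, l ≠ i → l ≠ j → y l ∈ S := by
    intro l hl hli hlj
    simp only [hS, Finset.mem_insert, Finset.mem_image, Finset.mem_erase, Finset.mem_range]
    exact Or.inr (Or.inr ⟨l, ⟨hlj, hli, hl⟩, rfl⟩)
  have hmem : ∀ w ∈ S, w = x i ∨ w = x j ∨ ∃ l < k, w = y l := by
    intro w hw
    simp only [hS, Finset.mem_insert, Finset.mem_image, Finset.mem_erase, Finset.mem_range] at hw
    grind
  have hc : c ∉ S := by
    intro h
    have := (h1 i hi).ne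
    have := (h1 j hj).ne
    grind
  have := hm S ⟨?_, ?_⟩
  · omega
  · intro w hw
    rw [h7]
    grind
  · intro w hw hws
    rcases (h7 w).1 hw with rfl | ⟨l, hl, rfl | rfl⟩
    · exact ⟨⟨x i, hxi, h1 i hi⟩, Or.inr ⟨x i, hxi, x j, hxj, h1 i hi, hadj⟩⟩
    · have hli : l ≠ i := by rintro rfl; exact hws hxi
      have hlj : l ≠ j := by rintro rfl; exact hws hxj
      exact ⟨⟨y l, hym l hl hli hlj, h2 l hl⟩, Or.inl ⟨c, (h7 c).2 (Or.inl rfl), hc, (h1 l hl).symm⟩⟩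
    · by_cases hli : l = i
      · subst hli
        exact ⟨⟨x l, hxi, (h2 l hl).symm⟩, Or.inr ⟨x l, hxi, x j, hxj, (h2 l hl).symm, hadj⟩⟩
      by_cases hlj : l = j
      · subst hlj
        exact ⟨⟨x l, hxj, (h2 l hl).symm⟩, Or.inr ⟨x l, hxj, x i, hxi, (h2 l hl).symm, hadj.symm⟩⟩
      · exact absurd (hym l hl hli hlj) hws

lemma Lab.yy (L : Lab G c k x y X) (hm : ∀ S, NTD G X S → k < S.card) (hk : k ≠ 2) {i j : ℕ}
    (hi : i < k) (hj : j < k) : ¬ G.Adj (y i) (y j) := by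
  intro hadj
  have hij : i ≠ j := by rintro rfl; exact G.loopless.irrefl _ hadj
  obtain ⟨m, hmk, hmi, hmj⟩ : ∃ m < k, m ≠ i ∧ m ≠ j := by
    by_cases h0 : 0 ≠ i ∧ 0 ≠ j
    · exact ⟨0, by omega, h0⟩
    by_cases h1 : 1 ≠ i ∧ 1 ≠ j
    · exact ⟨1, by omega, h1⟩
    · exact ⟨2, by omega, by omega, by omega⟩
  have hcard := card_erase2 x c (y i) hi hj hij
  set S := insert c (insert (y i) ((((Finset.range k).erase i).erase j).image x)) with hS
  obtain ⟨h1, h2, h3, h4, h5, h6, h7⟩ := L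
  have hyi : y i ∈ S := by simp [hS]
  have hc : c ∈ S := by simp [hS]
  have hxm : ∀ l < k, l ≠ i → l ≠ j → x l ∈ S := by
    intro l hl hli hlj
    simp only [hS, Finset.mem_insert, Finset.mem_image, Finset.mem_erase, Finset.mem_range]
    exact Or.inr (Or.inr ⟨l, ⟨hlj, hli, hl⟩, rfl⟩)
  have hmem : ∀ w ∈ S, w = c ∨ w = y i ∨ ∃ l < k, l ≠ j ∧ w = x l := by
    intro w hw
    simp only [hS, Finset.mem_insert, Finset.mem_image, Finset.mem_erase, Finset.mem_range] at hw
    grind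
  have hxj : x j ∉ S := by
    intro h
    have := (h1 j hj).ne
    grind
  have := hm S ⟨?_, ?_⟩
  · omega
  · intro w hw
    rw [h7]
    grind
  · intro w hw hws
    have hxmS := hxm m hmk hmi hmj
    rcases (h7 w).1 hw with rfl | ⟨l, hl, rfl | rfl⟩
    · exact absurd hc hws
    · exact ⟨⟨c, hc, (h1 l hl).symm⟩, Or.inr ⟨c, hc, x m, hxmS, (h1 l hl).symm, h1 m hmk⟩⟩
    · have hli : l ≠ i := by rintro rfl; exact hws hyi
      by_cases hlj : l = j
      · subst hlj
        exact ⟨⟨y i, hyi, hadj.symm⟩, Or.inl ⟨x l, (h7 _).2 (Or.inr ⟨l, hl, Or.inl rfl⟩), hxj,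
          (h2 l hl).symm⟩⟩
      · exact ⟨⟨x l, hxm l hl hli hlj, (h2 l hl).symm⟩,
          Or.inr ⟨x l, hxm l hl hli hlj, c, hc, (h2 l hl).symm, (h1 l hl).symm⟩⟩

lemma Lab.iso [Fintype V] (L : Lab G c k x y Finset.univ)
    (hm : ∀ S, NTD G Finset.univ S → k < S.card)
    (hyy : ∀ i < k, ∀ j < k, ¬ G.Adj (y i) (y j)) : Nonempty (G ≃g subdividedStar k) := by
  have hcy : ∀ i < k, ¬ G.Adj c (y i) := fun i hi => L.cy hm hi
  have hxx : ∀ i < k, ∀ j < k, ¬ G.Adj (x i) (x j) := fun i hi j hj => L.xx hm hi hj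
  have hxy : ∀ i < k, ∀ j < k, i ≠ j → ¬ G.Adj (x i) (y j) := fun i hi j hj => L.xy' hm hi hj
  obtain ⟨h1, h2, h3, h4, h5, h6, h7⟩ := L
  have h8 : ∀ i < k, c ≠ x i := fun i hi => (h1 i hi).ne
  let f : Fin (2 * k + 1) → V := fun a =>
    if a.val = 0 then c else if a.val ≤ k then x (a.val - 1) else y (a.val - k - 1)
  have trich : ∀ a : Fin (2 * k + 1), (a.val = 0 ∧ f a = c) ∨
      (∃ i < k, a.val = i + 1 ∧ f a = x i) ∨ (∃ i < k, a.val = i + 1 + k ∧ f a = y i) := by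
    intro a
    have := a.isLt
    by_cases h0 : a.val = 0
    · left; exact ⟨h0, if_pos h0⟩
    by_cases h0' : a.val ≤ k
    · right; left
      exact ⟨a.val - 1, by omega, by omega, (if_neg h0).trans (if_pos h0')⟩
    · right; right
      exact ⟨a.val - k - 1, by omega, by omega, (if_neg h0).trans (if_neg h0')⟩
  have hinj : Function.Injective f := by
    intro a b hab
    apply Fin.ext
    rcases trich a with ⟨e, e'⟩ | ⟨i, hi, e, e'⟩ | ⟨i, hi, e, e'⟩ <;>
    rcases trich b with ⟨g, g'⟩ | ⟨j, hj, g, g'⟩ | ⟨j, hj, g, g'⟩ <;>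
    rw [e', g'] at hab
    · omega
    · exact absurd hab (h8 j hj)
    · exact absurd hab (h6 j hj)
    · exact absurd hab.symm (h8 i hi)
    · have := h3 i hi j hj hab; omega
    · exact absurd hab (h5 i hi j hj)
    · exact absurd hab.symm (h6 i hi)
    · exact absurd hab.symm (h5 j hj i hi)
    · have := h4 i hi j hj hab; omega
  have hsurj : Function.Surjective f := by
    intro w
    rcases (h7 w).1 (Finset.mem_univ _) with rfl | ⟨i, hi, rfl | rfl⟩
    · exact ⟨⟨0, by omega⟩, by simp [f]⟩
    · exact ⟨⟨i + 1, by omega⟩, by simp [f]; omega⟩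
    · refine ⟨⟨i + 1 + k, by omega⟩, ?_⟩
      have e1 : ¬ (i + 1 + k ≤ k) := by omega
      have e2 : i + 1 + k - k - 1 = i := by omega
      simp [f, e1, e2]
  have hadj : ∀ a b, G.Adj (f a) (f b) ↔ (subdividedStar k).Adj a b := by
    intro a b
    have hab : a ≠ b ↔ a.val ≠ b.val := by rw [Ne, Fin.ext_iff]
    simp only [subdividedStar, SimpleGraph.fromRel_adj, hab]
    rcases trich a with ⟨e, e'⟩ | ⟨i, hi, e, e'⟩ | ⟨i, hi, e, e'⟩ <;>
    rcases trich b with ⟨g, g'⟩ | ⟨j, hj, g, g'⟩ | ⟨j, hj, g, g'⟩ <;>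
    rw [e', g', e, g]
    · exact iff_of_false (G.loopless.irrefl _) (by omega)
    · exact iff_of_true (h1 j hj) (by omega)
    · exact iff_of_false (hcy j hj) (by omega)
    · exact iff_of_true (h1 i hi).symm (by omega)
    · exact iff_of_false (hxx i hi j hj) (by omega)
    · by_cases hij : i = j
      · subst hij
        exact iff_of_true (h2 i hi) (by omega)
      · exact iff_of_false (hxy i hi j hj hij) (by omega)
    · exact iff_of_false (fun h => hcy i hi h.symm) (by omega)
    · by_cases hij : i = j
      · subst hij
        exact iff_of_true (h2 i hi).symm (by omega)
      · exact iff_of_false (fun h => hxy j hj i hi (Ne.symm hij) h.symm) (by omega)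
    · exact iff_of_false (hyy i hi j hj) (by omega)
  exact ⟨(⟨Equiv.ofBijective f ⟨hinj, hsurj⟩, by intro a b; exact hadj a b⟩ :
    subdividedStar k ≃g G).symm⟩

lemma Lab.c5 [Fintype V] (L : Lab G c 2 x y Finset.univ)
    (hm : ∀ S, NTD G Finset.univ S → 2 < S.card)
    (hyy : G.Adj (y 0) (y 1)) : Nonempty (G ≃g cycleGraph 5) := by
  have a1 := L.cy hm (i := 0) (by omega)
  have a2 := L.cy hm (i := 1) (by omega)
  have a3 := L.xx hm (i := 0) (j := 1) (by omega) (by omega)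
  have a4 := L.xy' hm (i := 0) (j := 1) (by omega) (by omega) (by omega)
  have a5 := L.xy' hm (i := 1) (j := 0) (by omega) (by omega) (by omega)
  obtain ⟨h1, h2, h3, h4, h5, h6, h7⟩ := L
  have b1 := h1 0 (by omega)
  have b2 := h1 1 (by omega)
  have b3 := h2 0 (by omega)
  have b4 := h2 1 (by omega)
  have c1 := h3 0 (by omega) 1 (by omega)
  have c2 := h4 0 (by omega) 1 (by omega)
  have c3 := h5 0 (by omega) 1 (by omega)
  have c4 := h5 1 (by omega) 0 (by omega)
  have c5 := h6 0 (by omega)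
  have c6 := h6 1 (by omega)
  have d1 : x 0 ≠ x 1 := fun h => by simpa using c1 h
  let f : Fin 5 → V := ![c, x 0, y 0, y 1, x 1]
  have hinj : Function.Injective f := by
    have n1 := b1.ne
    have n2 := b2.ne
    have n3 := b3.ne
    have n4 := b4.ne
    have n5 := hyy.ne
    intro a b hab
    fin_cases a <;> fin_cases b <;> simp [f] at hab ⊢ <;> grind
  have hsurj : Function.Surjective f := by
    intro w
    rcases (h7 w).1 (Finset.mem_univ _) with rfl | ⟨i, hi, h⟩
    · exact ⟨0, rfl⟩
    · interval_cases i
      · rcases h with rfl | rfl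
        · exact ⟨1, rfl⟩
        · exact ⟨2, rfl⟩
      · rcases h with rfl | rfl
        · exact ⟨4, rfl⟩
        · exact ⟨3, rfl⟩
  have hadj : ∀ a b, G.Adj (f a) (f b) ↔ (cycleGraph 5).Adj a b := by
    have q1 := G.adj_comm
    intro a b
    fin_cases a <;> fin_cases b <;>
      first
      | exact iff_of_false (G.loopless.irrefl _) (by decide)
      | exact iff_of_true (by first | assumption | exact SimpleGraph.Adj.symm (by assumption)) (by decide)
      | exact iff_of_false (by first | assumption | exact fun h => absurd h.symm (by assumption)) (by decide)
  exact ⟨(⟨Equiv.ofBijective f ⟨hinj, hsurj⟩, by intro a b; exact hadj a b⟩ :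
    cycleGraph 5 ≃g G).symm⟩

end

lemma NTD.isNTDSet [Fintype V] {S : Finset V} (h : NTD G Finset.univ S) : IsNTDSet G (S : Set V) := by
  obtain ⟨-, h⟩ := h
  constructor
  · intro v hv
    obtain ⟨⟨u, hu, huv⟩, -⟩ := h v (Finset.mem_univ _) (by simpa using hv)
    exact ⟨u, by simpa using hu, huv.symm⟩
  · rintro v ⟨u, hu, huv⟩
    by_cases hv : v ∈ S
    · exact ⟨u, ⟨v, by simpa using hv, huv.symm⟩, huv.symm⟩
    · obtain ⟨-, ⟨w, -, hw, hvw⟩ | ⟨p, hp, q, hq, hvp, hpq⟩⟩ := h v (Finset.mem_univ _) hv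
      · obtain ⟨⟨p, hp, hp'⟩, -⟩ := h w (Finset.mem_univ _) hw
        exact ⟨w, ⟨p, by simpa using hp, hp'.symm⟩, hvw⟩
      · exact ⟨p, ⟨q, by simpa using hq, hpq.symm⟩, hvp⟩

lemma conn_univ [Fintype V] (h : G.Connected) : Conn G (Finset.univ : Finset V) := by
  have := h.nonempty
  refine ⟨Finset.univ_nonempty, ?_⟩
  intro A _ hne hneq
  by_contra hcon
  push Not at hcon
  apply hneq
  rw [Finset.eq_univ_iff_forall]
  obtain ⟨a, ha⟩ := hne
  intro w
  obtain ⟨p⟩ := h.preconnected a w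
  induction p with
  | nil => exact ha
  | cons hadj _ ih =>
    apply ih
    by_contra hb
    exact hcon _ ha _ (Finset.mem_univ _) hb hadj

end NTDProof

theorem stmt4 [Fintype V] (G : SimpleGraph V) (hconn : G.Connected)
    (hn : 3 ≤ Fintype.card V) (hC5 : ¬ Nonempty (G ≃g cycleGraph 5))
    (h : 2 * ntdNum G = Fintype.card V + 1) :
    ∃ k : ℕ, 1 ≤ k ∧ Nonempty (G ≃g subdividedStar k) := by
  classical
  have hmin : ∀ S : Finset V, NTDProof.NTD G Finset.univ S → Fintype.card V + 1 ≤ 2 * S.card := by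
    intro S hS
    have : ntdNum G ≤ S.card := Nat.sInf_le ⟨(S : Set V), hS.isNTDSet, Set.ncard_coe_finset S⟩
    omega
  obtain ⟨-, hB⟩ := NTDProof.main_aux (G := G) (Fintype.card V) Finset.univ Finset.card_univ
    (by omega) (NTDProof.conn_univ hconn)
  rcases hB hn with ⟨S, hS, hS'⟩ | ⟨c, k, hs⟩
  · have := hmin S hS
    omega
  have hcard := hs.card
  rw [Finset.card_univ] at hcard
  have hm : ∀ S, NTDProof.NTD G Finset.univ S → k < S.card := by
    intro S hS
    have := hmin S hS
    omega
  obtain ⟨x, y, L⟩ := hs.label rfl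
  refine ⟨k, by omega, ?_⟩
  by_cases hk : k = 2
  · subst hk
    have h01 : ¬ G.Adj (y 0) (y 1) := fun h => hC5 (L.c5 hm h)
    apply L.iso hm
    intro i hi j hj
    interval_cases i <;> interval_cases j
    · exact G.loopless.irrefl _
    · exact h01
    · exact fun h => h01 h.symm
    · exact G.loopless.irrefl _
  · exact L.iso hm (fun i hi j hj => L.yy hm hk hi hj)
end

section
/- Let G be a connected graph of order n ≥ 4 with minimum degree δ(G) ≥ 2 that is not isomorphic to the 5-cycle C5. If 2·γnt(G) = n, then G is isomorphic to one of the following five graphs: B1 = the 4-cycle C4; B2 = the graph on six vertices consisting of a 5-cycle v1v2v3v4v5v1 together with a sixth vertex u adjacent exactly to v2 and v5; B3 = the 8-cycle C8; B4 = the graph obtained from an 8-cycle v1v2...v8v1 by adding the chord v1v5; B5 = the graph obtained from an 8-cycle v1v2...v8v1 by adding the two chords v1v5 and v2v6. -/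
open SimpleGraph

variable {V : Type*}

/-- The graph `B2`: a 5-cycle `v1 v2 v3 v4 v5 v1` (vertices `0,1,2,3,4`) together with a sixth
vertex `u = 5` adjacent exactly to `v2 = 1` and `v5 = 4`. -/
def graphB2 : SimpleGraph (Fin 6) :=
  SimpleGraph.fromRel (fun a b =>
    (a = 0 ∧ b = 1) ∨ (a = 1 ∧ b = 2) ∨ (a = 2 ∧ b = 3) ∨ (a = 3 ∧ b = 4) ∨
    (a = 4 ∧ b = 0) ∨ (a = 5 ∧ b = 1) ∨ (a = 5 ∧ b = 4))

/-- The graph `B4`: an 8-cycle `v1 v2 ... v8 v1` (vertices `0,...,7`) together with the chord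
`v1 v5 = {0, 4}`. -/
def graphB4 : SimpleGraph (Fin 8) :=
  SimpleGraph.fromRel (fun a b => (SimpleGraph.cycleGraph 8).Adj a b ∨ (a = 0 ∧ b = 4))

/-- The graph `B5`: an 8-cycle `v1 v2 ... v8 v1` (vertices `0,...,7`) together with the two
chords `v1 v5 = {0, 4}` and `v2 v6 = {1, 5}`. -/
def graphB5 : SimpleGraph (Fin 8) :=
  SimpleGraph.fromRel (fun a b =>
    (SimpleGraph.cycleGraph 8).Adj a b ∨ (a = 0 ∧ b = 4) ∨ (a = 1 ∧ b = 5))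


/-! ## Basic tools -/

section ntdproof
set_option linter.unusedSectionVars false

variable {W : Type*} [Fintype W] [DecidableEq W] {G : SimpleGraph W}

/-- A convenient reformulation of being an NTD-set. -/
def GoodSet (G : SimpleGraph W) (S : Finset W) : Prop :=
  ∀ v ∉ S, (∃ u ∈ S, G.Adj v u) ∧
    ((∃ u, u ∉ S ∧ G.Adj v u) ∨ ∃ u ∈ S, ∃ w ∈ S, G.Adj v u ∧ G.Adj u w)


lemma GoodSet.isNTD {S : Finset W} (h : GoodSet G S) : IsNTDSet G (S : Set W) := by
  refine ⟨fun v hv => ?_, ?_⟩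
  · obtain ⟨⟨u, hu, ha⟩, -⟩ := h v (by simpa using hv)
    exact ⟨u, by simpa using hu, ha.symm⟩
  · rintro v ⟨u, hu, huv⟩
    by_cases hv : v ∈ S
    · exact ⟨u, ⟨v, by simpa using hv, huv.symm⟩, huv.symm⟩
    · obtain ⟨-, ⟨w, hw, ha⟩ | ⟨w, hw, z, hz, h1, h2⟩⟩ := h v hv
      · obtain ⟨⟨t, ht, hwt⟩, -⟩ := h w hw
        exact ⟨w, ⟨t, by simpa using ht, hwt.symm⟩, ha⟩
      · exact ⟨w, ⟨z, by simpa using hz, h2.symm⟩, h1⟩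


lemma GoodSet.le {S : Finset W} (h : GoodSet G S) : ntdNum G ≤ S.card :=
  Nat.sInf_le ⟨S, h.isNTD, by simp⟩

/-- The part `Q` of the final set inside the piece `P` takes care of `P`,
given the part `T` inside the region `X`. -/
def PieceFine (G : SimpleGraph W) (T X P Q : Finset W) : Prop :=
  ∀ v ∈ P, v ∉ Q → (∃ t ∈ T, G.Adj v t) ∨ ((∃ u ∈ Q, G.Adj v u) ∧
    ((∃ x ∈ X, G.Adj v x) ∨ (∃ u ∈ P, u ∉ Q ∧ G.Adj v u) ∨
      ∃ u ∈ Q, ∃ w ∈ Q, G.Adj v u ∧ G.Adj u w))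

lemma good_of_pieces {T X R : Finset W} {PP : Finset (Finset W)} {q : Finset W → Finset W}
    (hTX : T ⊆ X) (hT : ∀ x ∈ X, ∃ t ∈ T, G.Adj x t)
    (hR : ∀ v, v ∈ R ↔ v ∉ X)
    (hdis : (PP : Set (Finset W)).PairwiseDisjoint id) (hcov : PP.biUnion id = R)
    (hq : ∀ P ∈ PP, q P ⊆ P) (hfine : ∀ P ∈ PP, PieceFine G T X P (q P)) :
    GoodSet G (T ∪ PP.biUnion q) := by
  have hSX : ∀ x ∈ X, x ∉ T → x ∉ T ∪ PP.biUnion q := by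
    intro x hx hxT h
    simp only [Finset.mem_union, Finset.mem_biUnion] at h
    rcases h with h | ⟨P, hP, hxP⟩
    · exact hxT h
    · have : x ∈ R := by
        rw [← hcov]; exact Finset.mem_biUnion.2 ⟨P, hP, hq P hP hxP⟩
      exact (hR x).1 this hx
  have hSP : ∀ P ∈ PP, ∀ x ∈ P, x ∉ q P → x ∉ T ∪ PP.biUnion q := by
    intro P hP x hx hxq h
    have hxR : x ∈ R := by
      rw [← hcov]; exact Finset.mem_biUnion.2 ⟨P, hP, hx⟩
    simp only [Finset.mem_union, Finset.mem_biUnion] at h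
    rcases h with h | ⟨P', hP', hxP⟩
    · exact (hR x).1 hxR (hTX h)
    · by_cases hPP : P = P'
      · subst hPP; exact hxq hxP
      · have := hdis hP hP' hPP
        exact (Finset.disjoint_left.1 this) hx (hq P' hP' hxP)
  intro v hv
  have hvT : v ∉ T := fun h => hv (Finset.mem_union_left _ h)
  have hact : ∀ t ∈ T, G.Adj v t → (∃ u ∈ T ∪ PP.biUnion q, G.Adj v u) ∧
    ((∃ u, u ∉ T ∪ PP.biUnion q ∧ G.Adj v u) ∨
      ∃ u ∈ T ∪ PP.biUnion q, ∃ w ∈ T ∪ PP.biUnion q, G.Adj v u ∧ G.Adj u w) := by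
    intro t ht hvt
    obtain ⟨s, hs, hts⟩ := hT t (hTX ht)
    exact ⟨⟨t, Finset.mem_union_left _ ht, hvt⟩, Or.inr ⟨t, Finset.mem_union_left _ ht, s,
      Finset.mem_union_left _ hs, hvt, hts⟩⟩
  by_cases hvX : v ∈ X
  · obtain ⟨t, ht, hvt⟩ := hT v hvX
    exact hact t ht hvt
  · have hvR : v ∈ R := (hR v).2 hvX
    rw [← hcov] at hvR
    obtain ⟨P, hP, hvP⟩ := Finset.mem_biUnion.1 hvR
    have hsub : ∀ u ∈ q P, u ∈ T ∪ PP.biUnion q := fun u hu =>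
      Finset.mem_union_right _ (Finset.mem_biUnion.2 ⟨P, hP, hu⟩)
    have hvq : v ∉ q P := fun h => hv (hsub v h)
    rcases hfine P hP v hvP hvq with ⟨t, ht, hvt⟩ | ⟨⟨u, hu, hvu⟩, h⟩
    · exact hact t ht hvt
    · rcases h with ⟨x, hx, hvx⟩ | ⟨w, hw, hwq, hvw⟩ | ⟨w, hw, z, hz, h1, h2⟩
      · by_cases hxT : x ∈ T
        · exact hact x hxT hvx
        · exact ⟨⟨u, hsub u hu, hvu⟩, Or.inl ⟨x, hSX x hx hxT, hvx⟩⟩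
      · exact ⟨⟨u, hsub u hu, hvu⟩, Or.inl ⟨w, hSP P hP w hw hwq, hvw⟩⟩
      · exact ⟨⟨u, hsub u hu, hvu⟩, Or.inr ⟨w, hsub w hw, z, hsub z hz, h1, h2⟩⟩

/-! ## Paths and cycles -/

/-- `p 0, ..., p (k-1)` is a path with `k` vertices inside `U`. -/
def PathIn (G : SimpleGraph W) (U : Finset W) (k : ℕ) (p : ℕ → W) : Prop :=
  (∀ i < k, p i ∈ U) ∧ (∀ i < k, ∀ j < k, p i = p j → i = j) ∧
    ∀ i, i + 1 < k → G.Adj (p i) (p (i + 1))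

/-- No vertex of `U` has three neighbours in `U`. -/
def MaxTwo (G : SimpleGraph W) (U : Finset W) : Prop :=
  ∀ v ∈ U, ∀ a ∈ U, ∀ b ∈ U, ∀ c ∈ U, G.Adj v a → G.Adj v b → G.Adj v c →
    a = b ∨ a = c ∨ b = c


lemma PathIn.le {U : Finset W} {k : ℕ} {p : ℕ → W} (h : PathIn G U k p) :
    k ≤ U.card := by
  have := Finset.card_le_card_of_injOn (s := Finset.range k) (t := U) p
    (fun i hi => h.1 i (by simpa using hi))
    (fun i hi j hj hij => h.2.1 i (by simpa using hi) j (by simpa using hj) hij)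
  simpa using this

lemma exists_longest {U : Finset W} (hU : U.Nonempty) (h2 : MaxTwo G U) :
    ∃ k p, 1 ≤ k ∧ PathIn G U k p ∧
      (∀ i < k, ∀ w ∈ U, G.Adj (p i) w → ∃ j < k, w = p j) ∧
      (∀ w ∈ U, G.Adj (p 0) w → (2 ≤ k ∧ w = p 1) ∨ (3 ≤ k ∧ w = p (k - 1))) ∧
      (∀ w ∈ U, G.Adj (p (k - 1)) w → (2 ≤ k ∧ w = p (k - 2)) ∨ (3 ≤ k ∧ w = p 0)) := by
  obtain ⟨u, hu⟩ := hU
  have h1 : ∃ p, PathIn G U 1 p := ⟨fun _ => u, by intro i _; exact hu, by intros; omega,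
    by intros; omega⟩
  classical
  let k := Nat.findGreatest (fun k => ∃ p, PathIn G U k p) U.card
  have hk1 : 1 ≤ k := Nat.le_findGreatest (by
    obtain ⟨p, hp⟩ := h1; exact hp.le) h1
  obtain ⟨p, hp⟩ : ∃ p, PathIn G U k p :=
    Nat.findGreatest_spec (P := fun k => ∃ p, PathIn G U k p) (m := 1)
      (by obtain ⟨p, hp⟩ := h1; exact hp.le) h1
  have hmax : ∀ p, ¬ PathIn G U (k + 1) p := by
    intro p hp
    have := Nat.le_findGreatest (P := fun k => ∃ p, PathIn G U k p) hp.le ⟨p, hp⟩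
    change k + 1 ≤ k at this
    omega
  obtain ⟨hpU, hinj, hadj⟩ := hp
  -- end extension
  have hend : ∀ w ∈ U, G.Adj (p (k - 1)) w → ∃ j < k, w = p j := by
    intro w hw ha
    by_contra hcon
    push Not at hcon
    apply hmax (fun i => if i = k then w else p i)
    refine ⟨?_, ?_, ?_⟩
    · intro i hi
      dsimp only
      split_ifs with h
      · exact hw
      · exact hpU i (by omega)
    · intro i hi j hj hij
      dsimp only at hij
      split_ifs at hij with h h' h'
      · omega
      · exact absurd hij (hcon j (by omega))
      · exact absurd hij.symm (hcon i (by omega))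
      · exact hinj i (by omega) j (by omega) hij
    · intro i hi
      dsimp only
      rw [if_neg (by omega)]
      split_ifs with h
      · have : i = k - 1 := by omega
        rw [this]; exact ha
      · exact hadj i (by omega)
  have hstart : ∀ w ∈ U, G.Adj (p 0) w → ∃ j < k, w = p j := by
    intro w hw ha
    by_contra hcon
    push Not at hcon
    apply hmax (fun i => if i = 0 then w else p (i - 1))
    refine ⟨?_, ?_, ?_⟩
    · intro i hi
      dsimp only
      split_ifs with h
      · exact hw
      · exact hpU _ (by omega)
    · intro i hi j hj hij
      dsimp only at hij
      split_ifs at hij with h h' h'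
      · omega
      · exact absurd hij (hcon _ (by omega))
      · exact absurd hij.symm (hcon _ (by omega))
      · have := hinj _ (by omega) _ (by omega) hij
        omega
    · intro i hi
      dsimp only
      rw [if_neg (by omega : i + 1 ≠ 0)]
      split_ifs with h
      · subst h; exact ha.symm
      · have := hadj (i - 1) (by omega)
        have h3 : i - 1 + 1 = i := by omega
        have h4 : i + 1 - 1 = i := by omega
        rw [h3] at this; rw [h4]; exact this
  have hinner : ∀ i, 0 < i → i + 1 < k → ∀ w ∈ U, G.Adj (p i) w →
      w = p (i - 1) ∨ w = p (i + 1) := by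
    intro i hi hik w hw ha
    have e1 : G.Adj (p i) (p (i + 1)) := hadj i hik
    have e2 : G.Adj (p i) (p (i - 1)) := by
      have := hadj (i - 1) (by omega)
      have h3 : i - 1 + 1 = i := by omega
      rw [h3] at this; exact this.symm
    rcases h2 (p i) (hpU i (by omega)) w hw _ (hpU (i - 1) (by omega)) _ (hpU (i + 1) hik)
      ha e2 e1 with h | h | h
    · exact Or.inl h
    · exact Or.inr h
    · have := hinj _ (by omega) _ (by omega) h
      omega
  refine ⟨k, p, hk1, ⟨hpU, hinj, hadj⟩, ?_, ?_, ?_⟩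
  · intro i hi w hw ha
    by_cases h0 : i = 0
    · subst h0; exact hstart w hw ha
    by_cases h1 : i = k - 1
    · subst h1; exact hend w hw ha
    rcases hinner i (by omega) (by omega) w hw ha with h | h
    · exact ⟨i - 1, by omega, h⟩
    · exact ⟨i + 1, by omega, h⟩
  · intro w hw ha
    obtain ⟨j, hj, rfl⟩ := hstart w hw ha
    have hj0 : j ≠ 0 := by rintro rfl; exact G.irrefl ha
    by_cases hj1 : j = 1
    · subst hj1; exact Or.inl ⟨by omega, rfl⟩
    by_cases hjk : j = k - 1
    · subst hjk; exact Or.inr ⟨by omega, rfl⟩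
    rcases hinner j (by omega) (by omega) _ (hpU 0 (by omega)) ha.symm with h | h
    · have := hinj _ (by omega) _ (by omega) h
      omega
    · have := hinj _ (by omega) _ (by omega) h
      omega
  · intro w hw ha
    obtain ⟨j, hj, rfl⟩ := hend w hw ha
    have hj0 : j ≠ k - 1 := by rintro rfl; exact G.irrefl ha
    by_cases hj1 : j = k - 2
    · subst hj1; exact Or.inl ⟨by omega, rfl⟩
    by_cases hjk : j = 0
    · subst hjk; exact Or.inr ⟨by omega, rfl⟩
    rcases hinner j (by omega) (by omega) _ (hpU (k - 1) (by omega)) ha.symm with h | h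
    · have := hinj _ (by omega) _ (by omega) h
      omega
    · have := hinj _ (by omega) _ (by omega) h
      omega


/-- A path (or cycle) piece attached to the region `X`. -/
def PathPiece (G : SimpleGraph W) (X : Finset W) (k : ℕ) (p : ℕ → W) : Prop :=
  2 ≤ k ∧ (∀ i < k, ∀ j < k, p i = p j → i = j) ∧
    (∀ i, i + 1 < k → G.Adj (p i) (p (i + 1))) ∧
    (∃ x ∈ X, G.Adj (p 0) x) ∧
    ((∃ x ∈ X, G.Adj (p (k - 1)) x) ∨ (3 ≤ k ∧ G.Adj (p (k - 1)) (p 0)))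

/-- The pieces of the decomposition of the complement of `X`. -/
def PieceOK (G : SimpleGraph W) (X P : Finset W) : Prop :=
  (∃ r, P = {r} ∧ ∀ w, G.Adj r w → w ∈ X) ∨
    ∃ k p, PathPiece G X k p ∧ P = (Finset.range k).image p

lemma decomp {X R : Finset W} (hX : X.Nonempty)
    (hR : ∀ v, v ∈ R ↔ v ∉ X) (h2 : MaxTwo G R)
    (hd : ∀ v u : W, ∃ w, G.Adj v w ∧ w ≠ u)
    (hcl : ∀ A : Finset W, A.Nonempty → (∀ v ∈ A, ∀ w, G.Adj v w → w ∈ A) → ∀ v, v ∈ A) :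
    ∀ n : ℕ, ∀ U ⊆ R, U.card ≤ n → (∀ v ∈ U, ∀ w ∈ R, G.Adj v w → w ∈ U) →
      ∃ PP : Finset (Finset W), (PP : Set (Finset W)).PairwiseDisjoint id ∧
        PP.biUnion id = U ∧ (∀ P ∈ PP, PieceOK G X P) ∧
        ∀ P ∈ PP, ∀ v ∈ P, ∀ w ∈ R, G.Adj v w → w ∈ P := by
  intro n
  induction n with
  | zero =>
    intro U _ hc _
    have : U = ∅ := by
      rw [← Finset.card_eq_zero]; omega
    subst this
    exact ⟨∅, by simp, by simp, by simp, by simp⟩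
  | succ n ih =>
    intro U hUR hc hUcl
    rcases U.eq_empty_or_nonempty with rfl | hU
    · exact ⟨∅, by simp, by simp, by simp, by simp⟩
    obtain ⟨k, p, hk, ⟨hpU, hinj, hadj⟩, hclo, h0, hl⟩ := exists_longest hU
      (fun v hv a ha b hb c hc => h2 v (hUR hv) a (hUR ha) b (hUR hb) c (hUR hc))
    set P := (Finset.range k).image p with hP
    have hPU : P ⊆ U := by
      intro v hv
      simp only [hP, Finset.mem_image, Finset.mem_range] at hv
      obtain ⟨i, hi, rfl⟩ := hv
      exact hpU i hi
    have hPcl : ∀ v ∈ P, ∀ w ∈ R, G.Adj v w → w ∈ P := by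
      intro v hv w hw ha
      have hwU := hUcl v (hPU hv) w hw ha
      simp only [hP, Finset.mem_image, Finset.mem_range] at hv ⊢
      obtain ⟨i, hi, rfl⟩ := hv
      obtain ⟨j, hj, rfl⟩ := hclo i hi w hwU ha
      exact ⟨j, hj, rfl⟩
    have hp0 : p 0 ∈ P := by
      simp only [hP, Finset.mem_image, Finset.mem_range]; exact ⟨0, by omega, rfl⟩
    have hnotR : ∀ w, w ∉ R → w ∈ X := fun w hw => by
      by_contra h; exact hw ((hR w).2 h)
    have hPOK : PieceOK G X P := by
      by_cases hk1 : k = 1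
      · left
        refine ⟨p 0, by simp [hP, hk1], ?_⟩
        intro w ha
        apply hnotR
        intro hw
        have hwU := hUcl _ (hPU hp0) w hw ha
        rcases h0 w hwU ha with ⟨h, _⟩ | ⟨h, _⟩ <;> omega
      right
      by_cases hcyc : 3 ≤ k ∧ G.Adj (p (k - 1)) (p 0)
      · obtain ⟨hk3, hcyc⟩ := hcyc
        -- some vertex is attached to X
        have : ∃ s < k, ∃ x ∈ X, G.Adj (p s) x := by
          by_contra hcon
          push Not at hcon
          have hall := hcl P ⟨_, hp0⟩ (by
            intro v hv w ha
            apply hPcl v hv w _ ha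
            simp only [hP, Finset.mem_image, Finset.mem_range] at hv
            obtain ⟨i, hi, rfl⟩ := hv
            by_contra hw
            exact hcon i hi w (hnotR w hw) ha)
          obtain ⟨x, hx⟩ := hX
          exact (hR x).1 (hUR (hPU (hall x))) hx
        obtain ⟨s, hs, x, hx, hsx⟩ := this
        have hstep : ∀ i < k, G.Adj (p i) (p ((i + 1) % k)) := by
          intro i hi
          by_cases h : i + 1 < k
          · rw [Nat.mod_eq_of_lt h]; exact hadj i h
          · have h' : i = k - 1 := by omega
            have h'' : (i + 1) % k = 0 := by
              have : i + 1 = k := by omega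
              rw [this, Nat.mod_self]
            rw [h'', h']; exact hcyc
        have hpos : 0 < k := by omega
        refine ⟨k, fun i => p ((i + s) % k), ⟨by omega, ?_, ?_, ⟨x, hx, ?_⟩, Or.inr ⟨hk3, ?_⟩⟩, ?_⟩
        · intro i hi j hj hij
          have := hinj _ (Nat.mod_lt _ hpos) _ (Nat.mod_lt _ hpos) hij
          have h3 : i ≡ j [MOD k] := Nat.ModEq.add_right_cancel' s this
          exact Nat.ModEq.eq_of_lt_of_lt h3 hi hj
        · intro i hi
          have := hstep ((i + s) % k) (Nat.mod_lt _ hpos)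
          rw [Nat.mod_add_mod] at this
          have h3 : i + 1 + s = i + s + 1 := by omega
          dsimp only
          rw [h3]; exact this
        · simpa [Nat.mod_eq_of_lt hs] using hsx
        · have := hstep ((k - 1 + s) % k) (Nat.mod_lt _ hpos)
          rw [Nat.mod_add_mod] at this
          have h3 : k - 1 + s + 1 = s + k := by omega
          rw [h3, Nat.add_mod_right] at this
          simpa using this
        · rw [hP]
          ext v
          simp only [Finset.mem_image, Finset.mem_range]
          constructor
          · rintro ⟨i, hi, rfl⟩
            refine ⟨(i + (k - s)) % k, Nat.mod_lt _ hpos, ?_⟩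
            rw [Nat.mod_add_mod]
            have h3 : i + (k - s) + s = i + k := by omega
            rw [h3, Nat.add_mod_right, Nat.mod_eq_of_lt hi]
          · rintro ⟨i, hi, rfl⟩
            exact ⟨_, Nat.mod_lt _ hpos, rfl⟩
      · have hk2 : 2 ≤ k := by omega
        refine ⟨k, p, ⟨hk2, hinj, hadj, ?_, Or.inl ?_⟩, rfl⟩
        · obtain ⟨w, hw, hne⟩ := hd (p 0) (p 1)
          refine ⟨w, hnotR w ?_, hw⟩
          intro hwR
          have hwU := hUcl _ (hPU hp0) w hwR hw
          rcases h0 w hwU hw with ⟨_, h⟩ | ⟨h3, h⟩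
          · exact hne h
          · subst h; exact hcyc ⟨h3, hw.symm⟩
        · obtain ⟨w, hw, hne⟩ := hd (p (k - 1)) (p (k - 2))
          refine ⟨w, hnotR w ?_, hw⟩
          intro hwR
          have hwU := hUcl _ (hpU (k - 1) (by omega)) w hwR hw
          rcases hl w hwU hw with ⟨_, h⟩ | ⟨h3, h⟩
          · exact hne h
          · subst h; exact hcyc ⟨h3, hw⟩
    have hcard : (U \ P).card ≤ n := by
      have : (U \ P).card < U.card := Finset.card_lt_card (by
        refine Finset.ssubset_iff_subset_ne.2 ⟨Finset.sdiff_subset, ?_⟩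
        intro h
        have : p 0 ∈ U \ P := (Finset.ext_iff.1 h (p 0)).2 (hPU hp0)
        exact (Finset.mem_sdiff.1 this).2 hp0)
      omega
    obtain ⟨PP, hdis, hcov, hok, hcl'⟩ := ih (U \ P) (Finset.sdiff_subset.trans hUR) hcard (by
      intro v hv w hw ha
      rw [Finset.mem_sdiff] at hv ⊢
      refine ⟨hUcl v hv.1 w hw ha, fun hwP => hv.2 (hPcl w hwP v (hUR hv.1) ha.symm)⟩)
    refine ⟨insert P PP, ?_, ?_, ?_, ?_⟩
    · rw [Finset.coe_insert]
      refine hdis.insert ?_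
      intro Q hQ _
      have hQs : Q ⊆ U \ P := by
        rw [← hcov]; exact Finset.subset_biUnion_of_mem id hQ
      exact Finset.disjoint_left.2 (fun v hv hvQ => (Finset.mem_sdiff.1 (hQs hvQ)).2 hv)
    · rw [Finset.biUnion_insert, hcov]
      simp only [id]
      exact Finset.union_sdiff_of_subset hPU
    · intro Q hQ
      rcases Finset.mem_insert.1 hQ with rfl | hQ
      · exact hPOK
      · exact hok Q hQ
    · intro Q hQ
      rcases Finset.mem_insert.1 hQ with rfl | hQ
      · exact hPcl
      · exact hcl' Q hQ

/-- The standard pattern on a path: positions `1 mod 3`, and the position `k-2` if `k = 1 mod 3`. -/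
def patt (k i : ℕ) : Prop := i < k ∧ (i % 3 = 1 ∨ (k % 3 = 1 ∧ i = k - 2))

instance (k i : ℕ) : Decidable (patt k i) := by unfold patt; infer_instance

lemma patt_card (k : ℕ) : ((Finset.range k).filter (patt k)).card ≤ (k + 2) / 3 := by
  have : ∀ i ∈ (Finset.range k).filter (patt k), (fun i => (if i % 3 = 1 then i / 3 else k / 3)) i
      ∈ Finset.range ((k + 2) / 3) := by
    intro i hi
    simp only [Finset.mem_filter, Finset.mem_range, patt] at hi ⊢
    split_ifs <;> omega
  refine (Finset.card_le_card_of_injOn _ this ?_).trans (by simp)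
  intro i hi j hj hij
  simp only [Finset.coe_filter, Finset.mem_range, patt, Set.mem_ofPred_eq] at hi hj hij
  split_ifs at hij <;> omega

lemma pathPiece_cost {T X : Finset W} {k : ℕ} {p : ℕ → W} (h : PathPiece G X k p) :
    ∃ Q ⊆ (Finset.range k).image p, PieceFine G T X ((Finset.range k).image p) Q ∧
      Q.card ≤ (k + 2) / 3 := by
  obtain ⟨hk, hinj, hadj, h0, hl⟩ := h
  have hadj' : ∀ i, 0 < i → i < k → G.Adj (p i) (p (i - 1)) := by
    intro i hi hik
    have := hadj (i - 1) (by omega)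
    have h3 : i - 1 + 1 = i := by omega
    rw [h3] at this; exact this.symm
  have hmem : ∀ i < k, p i ∈ (Finset.range k).image p := fun i hi =>
    Finset.mem_image.2 ⟨i, Finset.mem_range.2 hi, rfl⟩
  have hin : ∀ i, patt k i → p i ∈ ((Finset.range k).filter (patt k)).image p := by
    intro i hi
    exact Finset.mem_image.2 ⟨i, Finset.mem_filter.2 ⟨Finset.mem_range.2 hi.1, hi⟩, rfl⟩
  have hout : ∀ i < k, ¬ patt k i → p i ∉ ((Finset.range k).filter (patt k)).image p := by
    intro i hi hn hmem
    obtain ⟨j, hj, hji⟩ := Finset.mem_image.1 hmem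
    rw [Finset.mem_filter, Finset.mem_range] at hj
    have := hinj j hj.1 i hi hji
    subst this; exact hn hj.2
  refine ⟨((Finset.range k).filter (patt k)).image p,
    Finset.image_subset_image (Finset.filter_subset _ _), ?_,
    Finset.card_image_le.trans (patt_card k)⟩
  intro v hv hvQ
  obtain ⟨i, hi, rfl⟩ := Finset.mem_image.1 hv
  rw [Finset.mem_range] at hi
  have hnp : ¬ patt k i := fun hp => hvQ (hin i hp)
  right
  unfold patt at hnp
  rcases (by omega : i % 3 = 0 ∨ i % 3 = 2) with hm | hm
  · by_cases hlast : i + 1 < k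
    · refine ⟨⟨_, hin (i + 1) ⟨hlast, by omega⟩, hadj i hlast⟩, ?_⟩
      by_cases hi0 : i = 0
      · subst hi0; exact Or.inl h0
      · right; left
        refine ⟨p (i - 1), hmem _ (by omega), hout _ (by omega) ?_, hadj' i (by omega) hi⟩
        unfold patt; omega
    · have hk1 : k % 3 = 1 := by omega
      refine ⟨⟨_, hin (i - 1) ⟨by omega, by omega⟩, hadj' i (by omega) hi⟩, ?_⟩
      right; right
      refine ⟨_, hin (i - 1) ⟨by omega, by omega⟩, _, hin (i - 1 - 1) ⟨by omega, by omega⟩,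
        hadj' i (by omega) hi, hadj' _ (by omega) (by omega)⟩
  · refine ⟨⟨_, hin (i - 1) ⟨by omega, by omega⟩, hadj' i (by omega) hi⟩, ?_⟩
    by_cases hlast : i + 1 < k
    · right; left
      refine ⟨p (i + 1), hmem _ hlast, hout _ hlast ?_, hadj i hlast⟩
      unfold patt; omega
    · have : i = k - 1 := by omega
      rcases hl with hl | ⟨h3, hl⟩
      · left; rw [this]; exact hl
      · right; left
        refine ⟨p 0, hmem 0 (by omega), hout 0 (by omega) ?_, this ▸ hl⟩
        unfold patt; omega


/-! ## Systems of disjoint claws -/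

/-- `x` lists the vertices of `m` disjoint claws (`x i 0` is the center of the `i`-th one). -/
def StarSys (G : SimpleGraph W) (m : ℕ) (x : Fin m → Fin 4 → W) : Prop :=
  (∀ i j k l, x i k = x j l → i = j ∧ k = l) ∧ ∀ i (k : Fin 3), G.Adj (x i 0) (x i k.succ)

/-- The vertices of the claws. -/
def starX {m : ℕ} (x : Fin m → Fin 4 → W) : Finset W :=
  Finset.univ.image (fun q : Fin m × Fin 4 => x q.1 q.2)

/-- The centers of the claws and one leaf of each claw. -/
def starT {m : ℕ} (x : Fin m → Fin 4 → W) (a : Fin m → Fin 3) : Finset W :=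
  Finset.univ.image (fun i => x i 0) ∪ Finset.univ.image (fun i => x i (a i).succ)

lemma mem_starX {m : ℕ} {x : Fin m → Fin 4 → W} {v : W} :
    v ∈ starX x ↔ ∃ i k, x i k = v := by
  simp [starX]

lemma mem_starT {m : ℕ} {x : Fin m → Fin 4 → W} {a : Fin m → Fin 3} {v : W} :
    v ∈ starT x a ↔ ∃ i, x i 0 = v ∨ x i (a i).succ = v := by
  simp [starT, exists_or]

lemma card_starX {m : ℕ} {x : Fin m → Fin 4 → W} (h : StarSys G m x) :
    (starX x).card = 4 * m := by
  rw [starX, Finset.card_image_of_injective]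
  · simp [mul_comm]
  · rintro ⟨i, k⟩ ⟨j, l⟩ hij
    obtain ⟨rfl, rfl⟩ := h.1 _ _ _ _ hij
    rfl

lemma card_starT {m : ℕ} (x : Fin m → Fin 4 → W) (a : Fin m → Fin 3) :
    (starT x a).card ≤ 2 * m := by
  refine (Finset.card_union_le _ _).trans ?_
  have h1 : (Finset.univ.image (fun i => x i 0)).card ≤ m := Finset.card_image_le.trans (by simp)
  have h2 : (Finset.univ.image (fun i => x i (a i).succ)).card ≤ m :=
    Finset.card_image_le.trans (by simp)
  omega

lemma starT_sub {m : ℕ} (x : Fin m → Fin 4 → W) (a : Fin m → Fin 3) : starT x a ⊆ starX x := by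
  intro v hv
  rw [mem_starT] at hv
  rw [mem_starX]
  obtain ⟨i, h | h⟩ := hv
  · exact ⟨i, _, h⟩
  · exact ⟨i, _, h⟩

lemma starT_dom {m : ℕ} {x : Fin m → Fin 4 → W} (h : StarSys G m x) (a : Fin m → Fin 3) :
    ∀ v ∈ starX x, ∃ t ∈ starT x a, G.Adj v t := by
  intro v hv
  obtain ⟨i, k, rfl⟩ := mem_starX.1 hv
  refine Fin.cases ?_ (fun k => ?_) k
  · exact ⟨_, mem_starT.2 ⟨i, Or.inr rfl⟩, h.2 i _⟩
  · exact ⟨_, mem_starT.2 ⟨i, Or.inl rfl⟩, (h.2 i k).symm⟩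

lemma vec4_inj {v a b c : W} (h1 : v ≠ a) (h2 : v ≠ b) (h3 : v ≠ c) (h4 : a ≠ b) (h5 : a ≠ c)
    (h6 : b ≠ c) {k l : Fin 4} (h : (![v, a, b, c] : Fin 4 → W) k = ![v, a, b, c] l) : k = l := by
  have h1' := h1.symm
  have h2' := h2.symm
  have h3' := h3.symm
  have h4' := h4.symm
  have h5' := h5.symm
  have h6' := h6.symm
  fin_cases k <;> fin_cases l <;> first | rfl | (exfalso; revert h; simpa)

lemma exists_stars (G : SimpleGraph W) :
    ∃ m, ∃ x : Fin m → Fin 4 → W, StarSys G m x ∧ MaxTwo G (Finset.univ \ starX x) := by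
  classical
  have h0 : ∃ x : Fin 0 → Fin 4 → W, StarSys G 0 x :=
    ⟨fun i => i.elim0, fun i => i.elim0, fun i => i.elim0⟩
  have hb : ∀ m, (∃ x : Fin m → Fin 4 → W, StarSys G m x) → m ≤ Fintype.card W := by
    rintro m ⟨x, hx⟩
    have := Finset.card_le_univ (starX x)
    rw [card_starX hx] at this
    omega
  obtain ⟨m, ⟨x, hx⟩, hmax⟩ : ∃ m, (∃ x : Fin m → Fin 4 → W, StarSys G m x) ∧
      ¬ ∃ x : Fin (m + 1) → Fin 4 → W, StarSys G (m + 1) x := by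
    refine ⟨_, Nat.findGreatest_spec (P := fun m => ∃ x : Fin m → Fin 4 → W, StarSys G m x)
      (hb 0 h0) h0, fun hnew => ?_⟩
    have := Nat.le_findGreatest (P := fun m => ∃ x : Fin m → Fin 4 → W, StarSys G m x)
      (hb _ hnew) hnew
    omega
  refine ⟨_, x, hx, ?_⟩
  intro v hv a ha b hb' c hc hva hvb hvc
  by_contra hcon
  push Not at hcon
  obtain ⟨hab, hac, hbc⟩ := hcon
  have hnew : ∃ x : Fin (m + 1) → Fin 4 → W, StarSys G (m + 1) x := by
    have hnv := hva.ne
    have hnb := hvb.ne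
    have hnc := hvc.ne
    have hout : ∀ w ∈ Finset.univ \ starX x, ∀ i k, x i k ≠ w := by
      intro w hw i k h
      exact (Finset.mem_sdiff.1 hw).2 (mem_starX.2 ⟨i, k, h⟩)
    have hall : ∀ k i l, x i k ≠ (![v, a, b, c] : Fin 4 → W) l := by
      intro k i l
      fin_cases l
      · exact hout v hv i k
      · exact hout a ha i k
      · exact hout b hb' i k
      · exact hout c hc i k
    refine ⟨Fin.cons ![v, a, b, c] x, ?_, ?_⟩
    · intro i j
      refine Fin.cases ?_ (fun i => ?_) i <;> refine Fin.cases ?_ (fun j => ?_) j <;>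
        intro k l hkl
      · simp only [Fin.cons_zero] at hkl
        refine ⟨rfl, ?_⟩
        exact vec4_inj hnv hnb hnc hab hac hbc hkl
      · simp only [Fin.cons_zero, Fin.cons_succ] at hkl
        exact absurd hkl.symm (hall _ _ _)
      · simp only [Fin.cons_zero, Fin.cons_succ] at hkl
        exact absurd hkl (hall _ _ _)
      · simp only [Fin.cons_succ] at hkl
        obtain ⟨rfl, rfl⟩ := hx.1 _ _ _ _ hkl
        exact ⟨rfl, rfl⟩
    · intro i
      refine Fin.cases ?_ (fun i => ?_) i
      · intro k
        fin_cases k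
        · simpa using hva
        · simpa using hvb
        · simpa using hvc
      · intro k
        simpa using hx.2 i k
  exact hmax hnew

/-- The standard cost of a piece. -/
noncomputable def stdCost (G : SimpleGraph W) (T P : Finset W) : ℕ :=
  open Classical in
  if P.card = 1 then (if ∃ u ∈ P, ∃ t ∈ T, G.Adj u t then 0 else 1) else (P.card + 2) / 3

lemma std_exists {T X P : Finset W} (h : PieceOK G X P) :
    ∃ Q ⊆ P, PieceFine G T X P Q ∧ Q.card ≤ stdCost G T P := by
  rcases h with ⟨r, rfl, hr⟩ | ⟨k, p, hp, rfl⟩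
  · by_cases ht : ∃ t ∈ T, G.Adj r t
    · refine ⟨∅, by simp, ?_, by simp⟩
      intro v hv _
      rw [Finset.mem_singleton] at hv
      subst hv
      exact Or.inl ht
    · refine ⟨{r}, by simp, ?_, ?_⟩
      · intro v hv hv'
        exact absurd hv hv'
      · unfold stdCost
        simp [ht]
  · obtain ⟨Q, hQ, hf, hc⟩ := pathPiece_cost (T := T) hp
    refine ⟨Q, hQ, hf, ?_⟩
    have hcard : ((Finset.range k).image p).card = k := by
      rw [Finset.card_image_of_injOn]
      · simp
      · intro i hi j hj hij
        exact hp.2.1 i (by simpa using hi) j (by simpa using hj) hij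
    have hk := hp.1
    unfold stdCost
    rw [hcard, if_neg (by omega)]
    exact hc

lemma count_undone {m : ℕ} {i j : Fin m} {p q : Fin 3} (h : i ≠ j ∨ p ≠ q) :
    2 * (Finset.univ.filter (fun a : Fin m → Fin 3 => a i ≠ p ∧ a j ≠ q)).card < 3 ^ m := by
  classical
  set F : Fin m → Finset (Fin 3) :=
    fun k => Finset.univ.filter (fun c => (k = i → c ≠ p) ∧ (k = j → c ≠ q)) with hF
  have h1 : Finset.univ.filter (fun a : Fin m → Fin 3 => a i ≠ p ∧ a j ≠ q)
      = Fintype.piFinset F := by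
    ext a
    simp only [hF, Finset.mem_filter, Finset.mem_univ, true_and, Fintype.mem_piFinset]
    constructor
    · rintro ⟨h1, h2⟩ k
      exact ⟨by rintro rfl; exact h1, by rintro rfl; exact h2⟩
    · intro h
      exact ⟨(h i).1 rfl, (h j).2 rfl⟩
  rw [h1, Fintype.card_piFinset]
  have hle : ∀ k, (F k).card ≤ 3 := fun k => (Finset.card_le_univ _).trans (by simp)
  have h3 : (3 : ℕ) ^ m = ∏ _k : Fin m, 3 := by simp
  by_cases hij : i = j
  · subst hij
    have hpq : p ≠ q := by simpa using h
    have hFi : (F i).card = 1 := by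
      simp only [hF, true_imp_iff]
      clear h h1 hle hF F
      revert p q
      decide
    rw [h3, ← Finset.mul_prod_erase _ _ (Finset.mem_univ i),
      ← Finset.mul_prod_erase _ _ (Finset.mem_univ i), hFi]
    have := Finset.prod_le_prod' (s := Finset.univ.erase i) (f := fun k => (F k).card)
      (g := fun _ => 3) (fun k _ => hle k)
    have hpos : 0 < ∏ x ∈ Finset.univ.erase i, (3 : ℕ) := Finset.prod_pos (by simp)
    omega
  · have hFi : (F i).card = 2 := by
      simp only [hF, true_imp_iff, hij, false_imp_iff, and_true]
      clear h h1 hle hF F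
      revert p
      decide
    have hFj : (F j).card = 2 := by
      simp only [hF, true_imp_iff, Ne.symm hij, false_imp_iff, true_and]
      clear h h1 hle hFi hF F
      revert q
      decide
    have hj : j ∈ Finset.univ.erase i := by simp [Ne.symm hij]
    rw [h3, ← Finset.mul_prod_erase _ _ (Finset.mem_univ i), ← Finset.mul_prod_erase _ _ hj,
      ← Finset.mul_prod_erase _ _ (Finset.mem_univ i), ← Finset.mul_prod_erase _ _ hj, hFi, hFj]
    have := Finset.prod_le_prod' (s := (Finset.univ.erase i).erase j) (f := fun k => (F k).card)
      (g := fun _ => 3) (fun k _ => hle k)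
    have hpos : 0 < ∏ x ∈ (Finset.univ.erase i).erase j, (3 : ℕ) := Finset.prod_pos (by simp)
    omega


/-! ## The equality analysis -/

/-- The situation of an extremal graph containing at least one claw. -/
structure Ctx (G : SimpleGraph W) (m : ℕ) (x : Fin m → Fin 4 → W) (PP : Finset (Finset W)) :
    Prop where
  star : StarSys G m x
  min : ∀ S, GoodSet G S → Fintype.card W ≤ 2 * S.card
  dis : (PP : Set (Finset W)).PairwiseDisjoint id
  cov : PP.biUnion id = Finset.univ \ starX x
  ok : ∀ P ∈ PP, PieceOK G (starX x) P
  pcl : ∀ P ∈ PP, ∀ v ∈ P, ∀ w ∈ Finset.univ \ starX x, G.Adj v w → w ∈ P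
  hd : ∀ v u : W, ∃ w, G.Adj v w ∧ w ≠ u
  hcl : ∀ A : Finset W, A.Nonempty → (∀ v ∈ A, ∀ w, G.Adj v w → w ∈ A) → ∀ v, v ∈ A

variable {m : ℕ} {x : Fin m → Fin 4 → W} {PP : Finset (Finset W)}

lemma Ctx.card_eq (C : Ctx G m x PP) : Fintype.card W = 4 * m + ∑ P ∈ PP, P.card := by
  have h1 : (PP.biUnion id).card = ∑ P ∈ PP, P.card := Finset.card_biUnion C.dis
  rw [C.cov, Finset.card_sdiff_of_subset (Finset.subset_univ _), card_starX C.star,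
    Finset.card_univ] at h1
  have h2 := Finset.card_le_univ (starX x)
  rw [card_starX C.star] at h2
  omega

lemma Ctx.sum_le (C : Ctx G m x PP) (a : Fin m → Fin 3) (q : Finset W → Finset W)
    (hq : ∀ P ∈ PP, q P ⊆ P) (hf : ∀ P ∈ PP, PieceFine G (starT x a) (starX x) P (q P)) :
    ∑ P ∈ PP, P.card ≤ ∑ P ∈ PP, 2 * (q P).card := by
  have h1 := C.min _ (good_of_pieces (starT_sub x a) (starT_dom C.star a)
    (R := Finset.univ \ starX x) (by simp) C.dis C.cov hq hf)
  have h2 : (starT x a ∪ PP.biUnion q).card ≤ 2 * m + ∑ P ∈ PP, (q P).card :=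
    (Finset.card_union_le _ _).trans (add_le_add (card_starT x a) Finset.card_biUnion_le)
  rw [C.card_eq] at h1
  rw [← Finset.mul_sum]
  omega

lemma Ctx.sum_std (C : Ctx G m x PP) (a : Fin m → Fin 3) :
    ∑ P ∈ PP, P.card ≤ ∑ P ∈ PP, 2 * stdCost G (starT x a) P := by
  have := fun P : {P // P ∈ PP} => std_exists (T := starT x a) (C.ok P.1 P.2)
  choose q hq hf hc using this
  refine (C.sum_le a (fun P => if h : P ∈ PP then q ⟨P, h⟩ else ∅) ?_ ?_).trans ?_
  · intro P hP
    simp only [hP, dif_pos]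
    exact hq _
  · intro P hP
    simp only [hP, dif_pos]
    exact hf ⟨P, hP⟩
  · refine Finset.sum_le_sum fun P hP => ?_
    simp only [hP, dif_pos]
    exact Nat.mul_le_mul_left 2 (hc _)

lemma Ctx.nonempty (C : Ctx G m x PP) {P : Finset W} (hP : P ∈ PP) : 1 ≤ P.card := by
  rcases C.ok P hP with ⟨r, rfl, _⟩ | ⟨k, p, hp, rfl⟩
  · simp
  · rw [Nat.one_le_iff_ne_zero, Finset.card_ne_zero]
    exact ⟨p 0, Finset.mem_image.2 ⟨0, Finset.mem_range.2 (by have := hp.1; omega), rfl⟩⟩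

lemma std_le {T P : Finset W} (h : 2 ≤ P.card) : 2 * stdCost G T P ≤ P.card := by
  unfold stdCost
  rw [if_neg (by omega)]
  omega

lemma Ctx.no_single (C : Ctx G m x PP) {P : Finset W} (hP : P ∈ PP) : 2 ≤ P.card := by
  by_contra hcon
  have h1 : P.card = 1 := by have := C.nonempty hP; omega
  have hsum : ∑ a : Fin m → Fin 3, ∑ P ∈ PP, P.card ≤
      ∑ a : Fin m → Fin 3, ∑ P ∈ PP, 2 * stdCost G (starT x a) P :=
    Finset.sum_le_sum fun a _ => C.sum_std a
  rw [Finset.sum_comm, Finset.sum_comm (s := Finset.univ)] at hsum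
  have key : ∀ P ∈ PP, P.card = 1 →
      ∑ a : Fin m → Fin 3, 2 * stdCost G (starT x a) P < ∑ a : Fin m → Fin 3, P.card := by
    intro P hP h1
    rcases C.ok P hP with ⟨r, rfl, hr⟩ | ⟨k, p, hp, rfl⟩
    · obtain ⟨w1, hw1, _⟩ := C.hd r r
      obtain ⟨w2, hw2, hne⟩ := C.hd r w1
      obtain ⟨i, k1, rfl⟩ := mem_starX.1 (hr _ hw1)
      obtain ⟨j, k2, rfl⟩ := mem_starX.1 (hr _ hw2)
      have hun : ∃ i j p q, (i ≠ j ∨ p ≠ q) ∧ ∀ a : Fin m → Fin 3,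
          ¬ (a i ≠ p ∧ a j ≠ q) → ∃ t ∈ starT x a, G.Adj r t := by
        by_cases h0 : k1 = 0
        · subst h0
          exact ⟨i, i, 0, 1, by simp, fun a _ => ⟨_, mem_starT.2 ⟨i, Or.inl rfl⟩, hw1⟩⟩
        by_cases h0' : k2 = 0
        · subst h0'
          exact ⟨i, i, 0, 1, by simp, fun a _ => ⟨_, mem_starT.2 ⟨j, Or.inl rfl⟩, hw2⟩⟩
        obtain ⟨p, rfl⟩ := Fin.exists_succ_eq.2 h0
        obtain ⟨q, rfl⟩ := Fin.exists_succ_eq.2 h0'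
        refine ⟨i, j, p, q, ?_, ?_⟩
        · by_contra hc
          push Not at hc
          obtain ⟨rfl, rfl⟩ := hc
          exact hne rfl
        · intro a ha
          by_cases h : a i = p
          · exact ⟨_, mem_starT.2 ⟨i, Or.inr rfl⟩, by rw [h]; exact hw1⟩
          · have h' : a j = q := by
              by_contra h'; exact ha ⟨h, h'⟩
            exact ⟨_, mem_starT.2 ⟨j, Or.inr rfl⟩, by rw [h']; exact hw2⟩
      obtain ⟨i, j, p, q, hpq, hun⟩ := hun
      have hcnt := count_undone hpq
      have hle : ∀ a : Fin m → Fin 3, 2 * stdCost G (starT x a) {r} ≤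
          2 * (if a i ≠ p ∧ a j ≠ q then 1 else 0) := by
        intro a
        unfold stdCost
        by_cases h : a i ≠ p ∧ a j ≠ q
        · rw [if_pos h]
          split_ifs <;> simp
        · have := hun a h
          simp [this]
      refine (Finset.sum_le_sum fun a _ => hle a).trans_lt ?_
      rw [← Finset.mul_sum, Finset.sum_boole]
      simpa using hcnt
    · have hk := hp.1
      rw [Finset.card_image_of_injOn] at h1
      · simp at h1; omega
      · intro i hi j hj hij
        exact hp.2.1 i (by simpa using hi) j (by simpa using hj) hij
  have hlt := Finset.sum_lt_sum (s := PP)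
    (f := fun P => ∑ a : Fin m → Fin 3, 2 * stdCost G (starT x a) P)
    (g := fun P => ∑ a : Fin m → Fin 3, P.card) (by
      intro P hP
      by_cases h : P.card = 1
      · exact (key P hP h).le
      · exact Finset.sum_le_sum fun a _ => std_le (by have := C.nonempty hP; omega))
    ⟨P, hP, key P hP h1⟩
  omega

lemma Ctx.piece_le (C : Ctx G m x PP) (a : Fin m → Fin 3) {P Q : Finset W} (hP : P ∈ PP)
    (hQ : Q ⊆ P) (hf : PieceFine G (starT x a) (starX x) P Q) : P.card ≤ 2 * Q.card := by
  by_contra hcon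
  have := fun P : {P // P ∈ PP} => std_exists (T := starT x a) (C.ok P.1 P.2)
  choose q hq hf' hc using this
  have h1 := C.sum_le a (fun P' => if P' = P then Q else if h : P' ∈ PP then q ⟨P', h⟩ else ∅)
    (by
      intro P' hP'
      by_cases h : P' = P
      · subst h; simpa using hQ
      · simp only [h, hP', dif_pos, if_false]; exact hq _)
    (by
      intro P' hP'
      by_cases h : P' = P
      · subst h; simpa using hf
      · simp only [h, hP', dif_pos, if_false]; exact hf' ⟨P', hP'⟩)
  have h2 := Finset.sum_lt_sum (s := PP)
    (f := fun P' => 2 * (if P' = P then Q else if h : P' ∈ PP then q ⟨P', h⟩ else ∅).card)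
    (g := fun P' => P'.card) (by
      intro P' hP'
      by_cases h : P' = P
      · subst h; simp only [if_true]; omega
      · simp only [h, hP', dif_pos, if_false]
        exact (Nat.mul_le_mul_left 2 (hc ⟨P', hP'⟩)).trans (std_le (C.no_single hP')))
    ⟨P, hP, by simp only [if_true]; omega⟩
  omega

lemma exists_choice {v w : W} (hw : w ∈ starX x) (hvw : G.Adj v w) :
    ∃ a, ∃ t ∈ starT x a, G.Adj v t := by
  obtain ⟨i, k, rfl⟩ := mem_starX.1 hw
  revert hvw
  refine Fin.cases ?_ (fun k => ?_) k
  · intro hvw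
    exact ⟨fun _ => 0, _, mem_starT.2 ⟨i, Or.inl rfl⟩, hvw⟩
  · intro hvw
    exact ⟨fun _ => k, _, mem_starT.2 ⟨i, Or.inr rfl⟩, hvw⟩

/-- All pieces are edges both of whose ends are attached to the claws. -/
lemma Ctx.pair (C : Ctx G m x PP) {P : Finset W} (hP : P ∈ PP) :
    ∃ u w, u ≠ w ∧ P = {u, w} ∧ G.Adj u w ∧ (∃ t ∈ starX x, G.Adj u t) ∧
      ∃ t ∈ starX x, G.Adj w t := by
  have hns := C.no_single hP
  rcases C.ok P hP with ⟨r, rfl, hr⟩ | ⟨k, p, hp, rfl⟩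
  · simp at hns
  have hcard : ((Finset.range k).image p).card = k := by
    rw [Finset.card_image_of_injOn]
    · simp
    · intro i hi j hj hij
      exact hp.2.1 i (by simpa using hi) j (by simpa using hj) hij
  obtain ⟨hk, hinj, hadj, ⟨t, ht, h0t⟩, hl⟩ := id hp
  obtain ⟨a, t', ht', h0t'⟩ := exists_choice ht h0t
  obtain ⟨Q, hQ, hf, hc⟩ := pathPiece_cost (T := starT x a) hp
  have h1 := C.piece_le a hP hQ hf
  rw [hcard] at h1
  have hk24 : k = 2 ∨ k = 4 := by omega
  rcases hk24 with rfl | rfl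
  · refine ⟨p 0, p 1, (hadj 0 (by omega)).ne, ?_, hadj 0 (by omega), ⟨t, ht, h0t⟩, ?_⟩
    · ext v
      simp [Finset.range_add_one]
      tauto
    · rcases hl with hl | ⟨h3, _⟩
      · exact hl
      · omega
  · exfalso
    have h2 := C.piece_le a (Q := {p 2}) hP (by simpa using ⟨2, by omega, rfl⟩) (by
      intro v hv hv2
      obtain ⟨i, hi, rfl⟩ := Finset.mem_image.1 hv
      rw [Finset.mem_range] at hi
      have e01 := hadj 0 (by omega)
      have e12 := hadj 1 (by omega)
      have e23 := hadj 2 (by omega)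
      have n02 : p 0 ≠ p 2 := fun h => by have := hinj 0 (by omega) 2 (by omega) h; omega
      have hm0 : p 0 ∈ (Finset.range 4).image p :=
        Finset.mem_image.2 ⟨0, Finset.mem_range.2 (by omega), rfl⟩
      interval_cases i
      · exact Or.inl ⟨t', ht', h0t'⟩
      · refine Or.inr ⟨⟨p 2, by simp, e12⟩, Or.inr (Or.inl ⟨p 0, hm0, by simpa, e01.symm⟩)⟩
      · simp at hv2
      · refine Or.inr ⟨⟨p 2, by simp, e23.symm⟩, ?_⟩
        rcases hl with hl | ⟨_, hl⟩
        · exact Or.inl hl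
        · exact Or.inr (Or.inl ⟨p 0, hm0, by simpa, hl⟩))
    rw [hcard] at h2
    simp at h2


lemma exists_choice_two {i j : Fin m} {k l : Fin 4} (h : i = j → k = 0 ∨ l = 0 ∨ k = l) :
    ∃ a, x i k ∈ starT x a ∧ x j l ∈ starT x a := by
  have key : ∀ (a : Fin m → Fin 3) (i : Fin m) (k : Fin 4),
      (∀ h : k ≠ 0, a i = k.pred h) → x i k ∈ starT x a := by
    intro a i k ha
    by_cases h0 : k = 0
    · subst h0; exact mem_starT.2 ⟨i, Or.inl rfl⟩
    · refine mem_starT.2 ⟨i, Or.inr ?_⟩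
      rw [ha h0, Fin.succ_pred]
  by_cases hk : k = 0
  · by_cases hl : l = 0
    · exact ⟨fun _ => 0, key _ _ _ fun h => absurd hk h, key _ _ _ fun h => absurd hl h⟩
    · exact ⟨fun _ => l.pred hl, key _ _ _ fun h => absurd hk h, key _ _ _ fun h => rfl⟩
  · by_cases hl : l = 0
    · exact ⟨fun _ => k.pred hk, key _ _ _ fun h => rfl, key _ _ _ fun h => absurd hl h⟩
    · refine ⟨fun t => if t = i then k.pred hk else l.pred hl, key _ _ _ fun h => by simp,
        key _ _ _ fun h' => ?_⟩
      split_ifs with hji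
      · rcases h hji.symm with h | h | h
        · exact absurd h hk
        · exact absurd h hl
        · subst h; rfl
      · rfl

lemma Ctx.compat (C : Ctx G m x PP) {u w : W} (hP : {u, w} ∈ PP) {i j : Fin m} {k l : Fin 4}
    (hu : G.Adj u (x i k)) (hw : G.Adj w (x j l)) : i = j ∧ k ≠ 0 ∧ l ≠ 0 ∧ k ≠ l := by
  by_contra hcon
  obtain ⟨a, h1, h2⟩ := exists_choice_two (x := x) (i := i) (j := j) (k := k) (l := l) (by
    intro hij
    by_contra h
    push Not at h
    exact hcon ⟨hij, h.1, h.2.1, h.2.2⟩)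
  have := C.piece_le a hP (Finset.empty_subset _) (by
    intro v hv _
    left
    simp only [Finset.mem_insert, Finset.mem_singleton] at hv
    rcases hv with rfl | rfl
    · exact ⟨_, h1, hu⟩
    · exact ⟨_, h2, hw⟩)
  have h2 := C.no_single hP
  simp only [Finset.card_empty] at this
  omega

/-- Every vertex outside the claws has a partner. -/
lemma Ctx.mate (C : Ctx G m x PP) {u : W} (hu : u ∉ starX x) :
    ∃ w, {u, w} ∈ PP ∧ u ≠ w ∧ G.Adj u w ∧ (∃ i k, G.Adj u (x i k)) ∧ ∃ j l, G.Adj w (x j l) := by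
  have : u ∈ PP.biUnion id := by rw [C.cov]; simpa using hu
  obtain ⟨P, hP, huP⟩ := Finset.mem_biUnion.1 this
  obtain ⟨a, b, hab, rfl, hadj, ⟨t, ht, hat⟩, ⟨s, hs, hbs⟩⟩ := C.pair hP
  obtain ⟨i, k, rfl⟩ := mem_starX.1 ht
  obtain ⟨j, l, rfl⟩ := mem_starX.1 hs
  simp only [id, Finset.mem_insert, Finset.mem_singleton] at huP
  rcases huP with rfl | rfl
  · exact ⟨b, hP, hab, hadj, ⟨i, k, hat⟩, j, l, hbs⟩
  · exact ⟨a, by rwa [Finset.pair_comm], hab.symm, hadj.symm, ⟨j, l, hbs⟩, i, k, hat⟩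

lemma Ctx.not_mem (C : Ctx G m x PP) {P : Finset W} (hP : P ∈ PP) {u : W} (hu : u ∈ P) :
    u ∉ starX x := by
  have : u ∈ PP.biUnion id := Finset.mem_biUnion.2 ⟨P, hP, hu⟩
  rw [C.cov] at this
  simpa using this

lemma Ctx.eq_of_mem (C : Ctx G m x PP) {P Q : Finset W} (hP : P ∈ PP) (hQ : Q ∈ PP) {u : W}
    (hu : u ∈ P) (hu' : u ∈ Q) : P = Q := by
  by_contra h
  exact (Finset.disjoint_left.1 (C.dis hP hQ h)) hu hu'

lemma Ctx.ne_of_pair (C : Ctx G m x PP) {u w : W} (hP : {u, w} ∈ PP) : u ≠ w := by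
  rintro rfl
  have := C.no_single hP
  simp at this

lemma Ctx.card_eq' (C : Ctx G m x PP) : Fintype.card W = 4 * m + 2 * PP.card := by
  rw [C.card_eq]
  have : ∑ P ∈ PP, P.card = ∑ P ∈ PP, 2 := by
    refine Finset.sum_congr rfl fun P hP => ?_
    obtain ⟨a, b, hab, rfl, _⟩ := C.pair hP
    exact Finset.card_pair hab
  rw [this]
  simp [mul_comm]

/-- A selection of one vertex of each pair. -/
def Sel (PP : Finset (Finset W)) (B : Finset W) : Prop :=
  (∀ u ∈ B, ∃ P ∈ PP, u ∈ P) ∧ (∀ P ∈ PP, ∃ w ∈ P, w ∈ B) ∧ B.card ≤ PP.card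

lemma Ctx.select (_C : Ctx G m x PP) {F : Finset W} (hF : ∀ P ∈ PP, ∃ u ∈ P, u ∉ F) :
    ∃ B, Sel PP B ∧ ∀ u ∈ B, u ∉ F := by
  choose f hf hf' using fun P : {P // P ∈ PP} => hF P.1 P.2
  refine ⟨PP.attach.image f, ⟨?_, ?_, ?_⟩, ?_⟩
  · intro u hu
    obtain ⟨P, _, rfl⟩ := Finset.mem_image.1 hu
    exact ⟨P.1, P.2, hf P⟩
  · intro P hP
    exact ⟨f ⟨P, hP⟩, hf _, Finset.mem_image.2 ⟨_, Finset.mem_attach _ _, rfl⟩⟩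
  · exact Finset.card_image_le.trans (by simp)
  · intro u hu
    obtain ⟨P, _, rfl⟩ := Finset.mem_image.1 hu
    exact hf' P

lemma Ctx.sel_adj (C : Ctx G m x PP) {B : Finset W} (hB : Sel PP B) {u : W} (hu : u ∉ starX x)
    (huB : u ∉ B) : ∃ w ∈ B, G.Adj u w ∧ {u, w} ∈ PP := by
  obtain ⟨w, hP, hne, hadj, -⟩ := C.mate hu
  obtain ⟨z, hz, hzB⟩ := hB.2.1 _ hP
  simp only [Finset.mem_insert, Finset.mem_singleton] at hz
  rcases hz with rfl | rfl
  · exact absurd hzB huB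
  · exact ⟨z, hzB, hadj, hP⟩

lemma Ctx.sel_not_mem (C : Ctx G m x PP) {B : Finset W} (hB : Sel PP B) {u : W} (hu : u ∈ B) :
    u ∉ starX x := by
  obtain ⟨P, hP, huP⟩ := hB.1 u hu
  exact C.not_mem hP huP

/-- The centers of the claws other than the claw `i0`, and one leaf of each of these claws. -/
def starT' (x : Fin m → Fin 4 → W) (a : Fin m → Fin 3) (i0 : Fin m) : Finset W :=
  (Finset.univ.erase i0).image (fun i => x i 0) ∪
    (Finset.univ.erase i0).image (fun i => x i (a i).succ)

lemma mem_starT' {a : Fin m → Fin 3} {i0 : Fin m} {v : W} :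
    v ∈ starT' x a i0 ↔ ∃ i, i ≠ i0 ∧ (x i 0 = v ∨ x i (a i).succ = v) := by
  simp only [starT', Finset.mem_union, Finset.mem_image, Finset.mem_erase, Finset.mem_univ,
    and_true]
  constructor
  · rintro (⟨i, h, h'⟩ | ⟨i, h, h'⟩)
    · exact ⟨i, h, Or.inl h'⟩
    · exact ⟨i, h, Or.inr h'⟩
  · rintro ⟨i, h, h' | h'⟩
    · exact Or.inl ⟨i, h, h'⟩
    · exact Or.inr ⟨i, h, h'⟩

lemma card_starT' (a : Fin m → Fin 3) (i0 : Fin m) : (starT' x a i0).card ≤ 2 * (m - 1) := by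
  refine (Finset.card_union_le _ _).trans ?_
  have h1 : ((Finset.univ.erase i0).image (fun i => x i 0)).card ≤ m - 1 :=
    Finset.card_image_le.trans (by simp)
  have h2 : ((Finset.univ.erase i0).image (fun i => x i (a i).succ)).card ≤ m - 1 :=
    Finset.card_image_le.trans (by simp)
  omega

lemma starT'_sub {a : Fin m → Fin 3} {i0 : Fin m} {v : W} (h : v ∈ starT' x a i0) :
    ∃ i k, i ≠ i0 ∧ x i k = v := by
  obtain ⟨i, hi, h | h⟩ := mem_starT'.1 h
  · exact ⟨i, _, hi, h⟩
  · exact ⟨i, _, hi, h⟩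

lemma starT'_dom (h : StarSys G m x) (a : Fin m → Fin 3) {i0 i : Fin m} (hi : i ≠ i0)
    (k : Fin 4) : ∃ t ∈ starT' x a i0, G.Adj (x i k) t := by
  refine Fin.cases ?_ (fun k => ?_) k
  · exact ⟨_, mem_starT'.2 ⟨i, hi, Or.inr rfl⟩, h.2 i _⟩
  · exact ⟨_, mem_starT'.2 ⟨i, hi, Or.inl rfl⟩, (h.2 i k).symm⟩

lemma starT'_act (h : StarSys G m x) {a : Fin m → Fin 3} {i0 : Fin m} {v : W}
    (hv : v ∈ starT' x a i0) : ∃ t ∈ starT' x a i0, G.Adj v t := by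
  obtain ⟨i, k, hi, rfl⟩ := starT'_sub hv
  exact starT'_dom h a hi k

lemma Ctx.mem_or (C : Ctx G m x PP) (i0 : Fin m) (v : W) :
    v ∉ starX x ∨ (∃ i k, i ≠ i0 ∧ x i k = v) ∨ v = x i0 0 ∨ ∃ k : Fin 3, v = x i0 k.succ := by
  by_cases h : v ∈ starX x
  · right
    obtain ⟨i, k, rfl⟩ := mem_starX.1 h
    by_cases hi : i = i0
    · subst hi
      right
      by_cases hk : k = 0
      · subst hk; exact Or.inl rfl
      · obtain ⟨p, rfl⟩ := Fin.exists_succ_eq.2 hk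
        exact Or.inr ⟨p, rfl⟩
    · exact Or.inl ⟨i, k, hi, rfl⟩
  · exact Or.inl h

lemma Ctx.clause (C : Ctx G m x PP) (i0 : Fin m) (a : Fin m → Fin 3) {B : Finset W}
    (hB : Sel PP B)
    (h : ∀ k : Fin 3, (∃ t ∈ starT' x a i0, G.Adj (x i0 0) t) ∨
      ∃ y, G.Adj (x i0 k.succ) y ∧ y ≠ x i0 0 ∧ y ∉ B) : False := by
  set T := starT' x a i0 with hT
  have hTS : ∀ t ∈ T, t ∈ insert (x i0 0) (T ∪ B) := fun t ht => by simp [ht]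
  have hBS : ∀ t ∈ B, t ∈ insert (x i0 0) (T ∪ B) := fun t ht => by simp [ht]
  have hc : x i0 0 ∈ insert (x i0 0) (T ∪ B) := by simp
  have hTadj : ∀ v t, t ∈ T → G.Adj v t → (∃ u ∈ insert (x i0 0) (T ∪ B), G.Adj v u) ∧
      ((∃ u, u ∉ insert (x i0 0) (T ∪ B) ∧ G.Adj v u) ∨
        ∃ u ∈ insert (x i0 0) (T ∪ B), ∃ w ∈ insert (x i0 0) (T ∪ B), G.Adj v u ∧ G.Adj u w) := by
    intro v t ht hvt
    obtain ⟨s, hs, hts⟩ := starT'_act C.star ht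
    exact ⟨⟨t, hTS t ht, hvt⟩, Or.inr ⟨t, hTS t ht, s, hTS s hs, hvt, hts⟩⟩
  have hleaf : ∀ k : Fin 3, x i0 k.succ ∉ insert (x i0 0) (T ∪ B) := by
    intro k hk
    simp only [Finset.mem_insert, Finset.mem_union] at hk
    rcases hk with hk | hk | hk
    · exact absurd (C.star.1 _ _ _ _ hk).2 (Fin.succ_ne_zero _)
    · obtain ⟨i, l, hi, hil⟩ := starT'_sub hk
      exact hi (C.star.1 _ _ _ _ hil).1
    · exact C.sel_not_mem hB hk (mem_starX.2 ⟨_, _, rfl⟩)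
  have hgood : GoodSet G (insert (x i0 0) (T ∪ B)) := by
    intro v hv
    rcases C.mem_or i0 v with hvX | ⟨i, k, hi, rfl⟩ | rfl | ⟨k, rfl⟩
    · obtain ⟨w, hw, hvw, hP⟩ := C.sel_adj hB hvX (fun h => hv (hBS _ h))
      obtain ⟨w', hP', -, -, ⟨j, l, hjl⟩, i', l', hil'⟩ := C.mate hvX
      refine ⟨⟨w, hBS w hw, hvw⟩, ?_⟩
      by_cases hj : j = i0
      · subst hj
        have hl := (C.compat hP' hjl hil').2.1
        obtain ⟨p, rfl⟩ := Fin.exists_succ_eq.2 hl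
        exact Or.inl ⟨_, hleaf p, hjl⟩
      · by_cases hs : x j l ∈ insert (x i0 0) (T ∪ B)
        · obtain ⟨t, ht, hst⟩ := starT'_dom C.star a hj l
          exact Or.inr ⟨_, hs, t, hTS t ht, hjl, hst⟩
        · exact Or.inl ⟨_, hs, hjl⟩
    · obtain ⟨t, ht, hst⟩ := starT'_dom C.star a hi k
      exact hTadj _ t ht hst
    · exact absurd hc hv
    · have had := (C.star.2 i0 k).symm
      rcases h k with ⟨t, ht, hct⟩ | ⟨y, hy, hyc, hyB⟩
      · exact ⟨⟨_, hc, had⟩, Or.inr ⟨_, hc, t, hTS t ht, had, hct⟩⟩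
      · by_cases hyT : y ∈ T
        · exact hTadj _ y hyT hy
        · exact ⟨⟨_, hc, had⟩, Or.inl ⟨y, by simp [hyc, hyT, hyB], hy⟩⟩
  have h1 := C.min _ hgood
  have h2 : (insert (x i0 0) (T ∪ B)).card ≤ (T ∪ B).card + 1 := Finset.card_insert_le _ _
  have h3 : (T ∪ B).card ≤ T.card + B.card := Finset.card_union_le _ _
  have h4 : T.card ≤ 2 * (m - 1) := card_starT' a i0
  have h5 := hB.2.2
  rw [C.card_eq'] at h1
  have := i0.pos
  omega

lemma exists_choice' {i0 j : Fin m} (hj : j ≠ i0) (l : Fin 4) : ∃ a, x j l ∈ starT' x a i0 := by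
  refine Fin.cases ?_ (fun l => ?_) l
  · exact ⟨fun _ => 0, mem_starT'.2 ⟨j, hj, Or.inl rfl⟩⟩
  · exact ⟨fun _ => l, mem_starT'.2 ⟨j, hj, Or.inr rfl⟩⟩

/-- The center of a claw is adjacent to its three leaves only. -/
lemma Ctx.center (C : Ctx G m x PP) (i0 : Fin m) {y : W} (hy : G.Adj (x i0 0) y) :
    ∃ k : Fin 3, y = x i0 k.succ := by
  rcases C.mem_or i0 y with hyX | ⟨j, l, hj, rfl⟩ | rfl | h
  · exfalso
    obtain ⟨w, hP, -, -, -, j, l, hjl⟩ := C.mate hyX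
    exact (C.compat hP hy.symm hjl).2.1 rfl
  · exfalso
    obtain ⟨a, ha⟩ := exists_choice' (x := x) hj l
    obtain ⟨B, hB, -⟩ := C.select (F := ∅) (by
      intro P hP
      obtain ⟨u, w, -, rfl, -⟩ := C.pair hP
      exact ⟨u, by simp, by simp⟩)
    exact C.clause i0 a hB (fun k => Or.inl ⟨_, ha, hy⟩)
  · exact absurd hy (G.irrefl)
  · exact h

/-- The main restriction on the neighbourhoods of the leaves of a claw. -/
lemma Ctx.sat (C : Ctx G m x PP) (i0 : Fin m) (y : Fin 3 → W)
    (hy : ∀ k, G.Adj (x i0 k.succ) (y k) ∧ y k ≠ x i0 0) : ∃ k l, {y k, y l} ∈ PP := by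
  by_contra hcon
  push Not at hcon
  obtain ⟨B, hB, hBF⟩ := C.select (F := Finset.univ.image y) (by
    intro P hP
    obtain ⟨u, w, -, rfl, -⟩ := C.pair hP
    by_contra h
    push Not at h
    have hu := h u (by simp)
    have hw := h w (by simp)
    obtain ⟨k, -, rfl⟩ := Finset.mem_image.1 hu
    obtain ⟨l, -, rfl⟩ := Finset.mem_image.1 hw
    exact hcon k l hP)
  refine C.clause i0 (fun _ => 0) hB (fun k => Or.inr ⟨y k, (hy k).1, (hy k).2, fun h => ?_⟩)
  exact hBF _ h (Finset.mem_image.2 ⟨k, Finset.mem_univ _, rfl⟩)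


lemma fin3_others (k3 : Fin 3) : ∃ k1 k2 : Fin 3, k1 ≠ k2 ∧ k1 ≠ k3 ∧ k2 ≠ k3 := by
  revert k3; decide

lemma fin3_cases {k1 k2 k3 : Fin 3} (h12 : k1 ≠ k2) (h13 : k1 ≠ k3) (h23 : k2 ≠ k3) (k : Fin 3) :
    k = k1 ∨ k = k2 ∨ k = k3 := by
  revert k1 k2 k3 k; decide

lemma Ctx.sat3 (C : Ctx G m x PP) (i0 : Fin m) {k1 k2 k3 : Fin 3} (h12 : k1 ≠ k2) (h13 : k1 ≠ k3)
    (h23 : k2 ≠ k3) {y1 y2 y3 : W} (h1 : G.Adj (x i0 k1.succ) y1) (h1' : y1 ≠ x i0 0)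
    (h2 : G.Adj (x i0 k2.succ) y2) (h2' : y2 ≠ x i0 0)
    (h3 : G.Adj (x i0 k3.succ) y3) (h3' : y3 ≠ x i0 0) :
    {y1, y2} ∈ PP ∨ {y1, y3} ∈ PP ∨ {y2, y3} ∈ PP := by
  set y : Fin 3 → W := fun k => if k = k1 then y1 else if k = k2 then y2 else y3 with hy
  have e1 : y k1 = y1 := by simp [hy]
  have e2 : y k2 = y2 := by simp [hy, h12.symm]
  have e3 : y k3 = y3 := by simp [hy, h13.symm, h23.symm]
  obtain ⟨k, l, hkl⟩ := C.sat i0 y (by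
    intro k
    rcases fin3_cases h12 h13 h23 k with rfl | rfl | rfl
    · rw [e1]; exact ⟨h1, h1'⟩
    · rw [e2]; exact ⟨h2, h2'⟩
    · rw [e3]; exact ⟨h3, h3'⟩)
  have hne := C.ne_of_pair hkl
  rcases fin3_cases h12 h13 h23 k with rfl | rfl | rfl <;>
    rcases fin3_cases h12 h13 h23 l with rfl | rfl | rfl <;>
    simp only [e1, e2, e3] at hkl hne <;>
    first
    | exact absurd rfl hne
    | (have hkl' := hkl; rw [Finset.pair_comm] at hkl'; tauto)

lemma Ctx.pair_right (C : Ctx G m x PP) {u v w : W} (h1 : {u, v} ∈ PP) (h2 : {u, w} ∈ PP) :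
    v = w := by
  have h := C.eq_of_mem h1 h2 (u := u) (by simp) (by simp)
  have hv : v ∈ ({u, w} : Finset W) := by rw [← h]; simp
  simp only [Finset.mem_insert, Finset.mem_singleton] at hv
  rcases hv with hv | hv
  · exact absurd hv.symm (C.ne_of_pair h1)
  · exact hv

/-- If there are at least two claws, some leaf of a claw is adjacent to another claw. -/
lemma Ctx.cross (C : Ctx G m x PP) {i0 j0 : Fin m} (hj0 : j0 ≠ i0) :
    ∃ (k : Fin 3) (j : Fin m) (l : Fin 4), j ≠ i0 ∧ G.Adj (x i0 k.succ) (x j l) := by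
  by_contra hcon
  push Not at hcon
  classical
  set A : Finset W := Finset.univ.filter (fun v => (∃ k, v = x i0 k) ∨
    (v ∉ starX x ∧ ∃ k, G.Adj v (x i0 k))) with hA
  have hmem : ∀ v, v ∈ A ↔ (∃ k, v = x i0 k) ∨ (v ∉ starX x ∧ ∃ k, G.Adj v (x i0 k)) := by
    intro v; simp [hA]
  have h := C.hcl A ⟨x i0 0, (hmem _).2 (Or.inl ⟨0, rfl⟩)⟩ (by
    intro v hv w hvw
    rw [hmem] at hv ⊢
    rcases hv with ⟨k, rfl⟩ | ⟨hvX, k, hk⟩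
    · rcases Fin.eq_zero_or_eq_succ k with rfl | ⟨p, rfl⟩
      · obtain ⟨p, rfl⟩ := C.center i0 hvw
        exact Or.inl ⟨_, rfl⟩
      · by_cases hw : w ∈ starX x
        · obtain ⟨j, l, rfl⟩ := mem_starX.1 hw
          by_cases hj : j = i0
          · subst hj; exact Or.inl ⟨_, rfl⟩
          · exact absurd hvw (hcon p j l hj)
        · exact Or.inr ⟨hw, _, hvw.symm⟩
    · obtain ⟨w', hP, hne, hadj, -, j', l', hw'⟩ := C.mate hvX
      have e1 := (C.compat hP hk hw').1
      by_cases hw : w ∈ starX x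
      · obtain ⟨j, l, rfl⟩ := mem_starX.1 hw
        have e2 := (C.compat hP hvw hw').1
        left
        exact ⟨l, by rw [e1, e2]⟩
      · have := C.pcl _ hP v (by simp) w (by simpa using hw) hvw
        simp only [Finset.mem_insert, Finset.mem_singleton] at this
        rcases this with rfl | rfl
        · exact absurd hvw G.irrefl
        · right
          exact ⟨hw, l', by rw [e1]; exact hw'⟩)
  have h' := h (x j0 0)
  rw [hmem] at h'
  rcases h' with ⟨k, hk⟩ | ⟨hX, -⟩
  · exact hj0 (C.star.1 _ _ _ _ hk).1
  · exact hX (mem_starX.2 ⟨_, _, rfl⟩)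

/-- There is only one claw. -/
lemma Ctx.one (C : Ctx G m x PP) {i0 j0 : Fin m} (hj0 : j0 ≠ i0) : False := by
  obtain ⟨k3, j, l, hj, hadj⟩ := C.cross hj0
  obtain ⟨k1, k2, h12, h13, h23⟩ := fin3_others k3
  have hjl : x j l ∈ starX x := mem_starX.2 ⟨_, _, rfl⟩
  have hjl0 : x j l ≠ x i0 0 := fun h => hj (C.star.1 _ _ _ _ h).1
  have key : ∀ y1 y2, G.Adj (x i0 k1.succ) y1 → y1 ≠ x i0 0 → G.Adj (x i0 k2.succ) y2 →
      y2 ≠ x i0 0 → {y1, y2} ∈ PP := by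
    intro y1 y2 h1 h1' h2 h2'
    rcases C.sat3 i0 h12 h13 h23 h1 h1' h2 h2' hadj hjl0 with h | h | h
    · exact h
    · exact absurd hjl (C.not_mem h (by simp))
    · exact absurd hjl (C.not_mem h (by simp))
  obtain ⟨y1, hy1, hy1'⟩ := C.hd (x i0 k1.succ) (x i0 0)
  obtain ⟨y2, hy2, hy2'⟩ := C.hd (x i0 k2.succ) (x i0 0)
  have hP0 := key y1 y2 hy1 hy1' hy2 hy2'
  have hy12 := C.ne_of_pair hP0
  have hN2 : ∀ y, G.Adj (x i0 k2.succ) y → y ≠ x i0 0 → y = y2 := fun y h h' =>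
    C.pair_right (key y1 y hy1 hy1' h h') hP0
  have hN1 : ∀ y, G.Adj (x i0 k1.succ) y → y ≠ x i0 0 → y = y1 := fun y h h' =>
    C.pair_right (u := y2) (by rw [Finset.pair_comm]; exact key y y2 h h' hy2 hy2')
      (by rw [Finset.pair_comm]; exact hP0)
  have hX1 : y1 ∉ starX x := C.not_mem hP0 (by simp)
  have hX2 : y2 ∉ starX x := C.not_mem hP0 (by simp)
  have hpadj : G.Adj y1 y2 := by
    obtain ⟨w, hw, -, hw', -⟩ := C.mate hX1
    rwa [C.pair_right hP0 hw]
  obtain ⟨a, ha⟩ := exists_choice' (x := x) hj l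
  obtain ⟨B, hB, -⟩ := C.select (F := ∅) (by
    intro P hP
    obtain ⟨u, w, -, rfl, -⟩ := C.pair hP
    exact ⟨u, by simp, by simp⟩)
  set T := starT' x a i0 with hT
  set S : Finset W := insert (x i0 k1.succ) (insert (x i0 k2.succ) (T ∪ (B \ {y1, y2}))) with hS
  have hmS : ∀ v, v ∈ S ↔ v = x i0 k1.succ ∨ v = x i0 k2.succ ∨ v ∈ T ∨
      (v ∈ B ∧ v ≠ y1 ∧ v ≠ y2) := by
    intro v
    simp [hS]
  have hleaf : ∀ k : Fin 4, k ≠ k1.succ → k ≠ k2.succ → x i0 k ∉ S := by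
    intro k n1 n2 hk
    rw [hmS] at hk
    rcases hk with hk | hk | hk | ⟨hk, -⟩
    · exact n1 (C.star.1 _ _ _ _ hk).2
    · exact n2 (C.star.1 _ _ _ _ hk).2
    · obtain ⟨i, l, hi, hil⟩ := starT'_sub hk
      exact hi (C.star.1 _ _ _ _ hil).1
    · exact C.sel_not_mem hB hk (mem_starX.2 ⟨_, _, rfl⟩)
  have hl3 : x i0 k3.succ ∉ S := hleaf _ (fun h => h13 (Fin.succ_inj.1 h).symm)
    (fun h => h23 (Fin.succ_inj.1 h).symm)
  have hyT : ∀ y, y ∉ starX x → y ∉ T := by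
    intro y hy h
    obtain ⟨i, l, -, hil⟩ := starT'_sub h
    exact hy (mem_starX.2 ⟨_, _, hil⟩)
  have hTadj : ∀ v t, t ∈ T → G.Adj v t → (∃ u ∈ S, G.Adj v u) ∧
      ((∃ u, u ∉ S ∧ G.Adj v u) ∨ ∃ u ∈ S, ∃ w ∈ S, G.Adj v u ∧ G.Adj u w) := by
    intro v t ht hvt
    obtain ⟨s, hs, hts⟩ := starT'_act C.star ht
    have ht' := (hmS t).2 (Or.inr (Or.inr (Or.inl ht)))
    have hs' := (hmS s).2 (Or.inr (Or.inr (Or.inl hs)))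
    exact ⟨⟨t, ht', hvt⟩, Or.inr ⟨t, ht', s, hs', hvt, hts⟩⟩
  have hy1S : y1 ∉ S := by
    rw [hmS]
    rintro (h | h | h | h)
    · exact hX1 (mem_starX.2 ⟨_, _, h.symm⟩)
    · exact hX1 (mem_starX.2 ⟨_, _, h.symm⟩)
    · exact hyT _ hX1 h
    · exact h.2.1 rfl
  have hy2S : y2 ∉ S := by
    rw [hmS]
    rintro (h | h | h | h)
    · exact hX2 (mem_starX.2 ⟨_, _, h.symm⟩)
    · exact hX2 (mem_starX.2 ⟨_, _, h.symm⟩)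
    · exact hyT _ hX2 h
    · exact h.2.2 rfl
  have hS1 : x i0 k1.succ ∈ S := by simp [hS]
  have hS2 : x i0 k2.succ ∈ S := by simp [hS]
  have hgood : GoodSet G S := by
    intro v hv
    rcases C.mem_or i0 v with hvX | ⟨i, k, hi, rfl⟩ | rfl | ⟨k, rfl⟩
    · by_cases hv1 : v = y1
      · subst hv1
        exact ⟨⟨_, hS1, hy1.symm⟩, Or.inl ⟨_, hy2S, hpadj⟩⟩
      by_cases hv2 : v = y2
      · subst hv2
        exact ⟨⟨_, hS2, hy2.symm⟩, Or.inl ⟨_, hy1S, hpadj.symm⟩⟩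
      obtain ⟨w, hw, hvw, hP⟩ := C.sel_adj hB hvX (fun h => hv ((hmS v).2 (Or.inr (Or.inr (Or.inr ⟨h, hv1, hv2⟩)))))
      have hP' : {w, v} ∈ PP := by rw [Finset.pair_comm]; exact hP
      have hwS : w ∈ S := by
        refine (hmS w).2 (Or.inr (Or.inr (Or.inr ⟨hw, ?_, ?_⟩)))
        · rintro rfl
          exact hv2 (C.pair_right hP' hP0)
        · rintro rfl
          exact hv1 (C.pair_right hP' (by rw [Finset.pair_comm]; exact hP0))
      obtain ⟨w', hPw, -, -, ⟨j, l, hjl⟩, i', l', hil'⟩ := C.mate hvX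
      refine ⟨⟨w, hwS, hvw⟩, ?_⟩
      by_cases hj : j = i0
      · subst hj
        have hl := (C.compat hPw hjl hil').2.1
        refine Or.inl ⟨_, hleaf l ?_ ?_, hjl⟩
        · rintro rfl
          exact hv1 (hN1 v hjl.symm (fun h => hvX (mem_starX.2 ⟨_, _, h.symm⟩)))
        · rintro rfl
          exact hv2 (hN2 v hjl.symm (fun h => hvX (mem_starX.2 ⟨_, _, h.symm⟩)))
      · by_cases hs : x j l ∈ S
        · obtain ⟨t, ht, hst⟩ := starT'_dom C.star a hj l
          exact Or.inr ⟨_, hs, t, (hmS t).2 (Or.inr (Or.inr (Or.inl ht))), hjl, hst⟩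
        · exact Or.inl ⟨_, hs, hjl⟩
    · obtain ⟨t, ht, hst⟩ := starT'_dom C.star a hi k
      exact hTadj _ t ht hst
    · exact ⟨⟨_, hS1, C.star.2 _ _⟩, Or.inl ⟨_, hl3, C.star.2 _ _⟩⟩
    · rcases fin3_cases h12 h13 h23 k with rfl | rfl | rfl
      · exact absurd hS1 hv
      · exact absurd hS2 hv
      · exact hTadj _ _ ha hadj
  have h1 := C.min _ hgood
  have h2 : S.card ≤ (T ∪ (B \ {y1, y2})).card + 1 + 1 :=
    (Finset.card_insert_le _ _).trans (Nat.succ_le_succ (Finset.card_insert_le _ _))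
  have h3 : (T ∪ (B \ {y1, y2})).card ≤ T.card + (B \ {y1, y2}).card := Finset.card_union_le _ _
  have h4 : T.card ≤ 2 * (m - 1) := card_starT' a i0
  have h5 := hB.2.2
  have h6 : (B \ {y1, y2}).card < B.card := by
    obtain ⟨w, hw, hwB⟩ := hB.2.1 _ hP0
    exact Finset.card_lt_card ⟨Finset.sdiff_subset, fun h => (Finset.mem_sdiff.1 (h hwB)).2 hw⟩
  rw [C.card_eq'] at h1
  have := i0.pos
  omega


/-! ## A single claw -/

lemma iso_of {n : ℕ} (H : SimpleGraph (Fin n)) (f : Fin n → W) (hi : Function.Injective f)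
    (hs : Function.Surjective f) (nb : Fin n → List (Fin n))
    (hG : ∀ i y, G.Adj (f i) y ↔ ∃ k ∈ nb i, y = f k)
    (hH : ∀ i j, H.Adj i j ↔ j ∈ nb i) : Nonempty (G ≃g H) := by
  have hb : Function.Bijective f := ⟨hi, hs⟩
  refine ⟨(RelIso.symm ⟨Equiv.ofBijective f hb, ?_⟩)⟩
  intro i j
  rw [hH, Equiv.ofBijective_apply, Equiv.ofBijective_apply, hG]
  constructor
  · rintro ⟨k, hk, hjk⟩
    rwa [hi hjk]
  · intro h
    exact ⟨j, h, rfl⟩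

/-- The situation of a single claw with center `c` and leaves `l1`, `l2`, `l3`; the relation `pr`
says that two vertices form a pair. -/
structure OneClaw (G : SimpleGraph W) (pr : W → W → Prop) (c l1 l2 l3 : W) : Prop where
  c1 : c ≠ l1
  c2 : c ≠ l2
  c3 : c ≠ l3
  l12 : l1 ≠ l2
  l13 : l1 ≠ l3
  l23 : l2 ≠ l3
  hc : ∀ y, G.Adj c y ↔ y = l1 ∨ y = l2 ∨ y = l3
  out : ∀ {u w}, pr u w → u ≠ c ∧ u ≠ l1 ∧ u ≠ l2 ∧ u ≠ l3
  symm : ∀ {u w}, pr u w → pr w u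
  ne : ∀ {u w}, pr u w → u ≠ w
  adj : ∀ {u w}, pr u w → G.Adj u w
  right : ∀ {u v w}, pr u v → pr u w → v = w
  cov : ∀ v, v = c ∨ v = l1 ∨ v = l2 ∨ v = l3 ∨ ∃ w, pr v w
  pcl : ∀ {u w z}, pr u w → G.Adj u z → z = w ∨ z = l1 ∨ z = l2 ∨ z = l3
  att : ∀ {u w}, pr u w → G.Adj l1 u ∨ G.Adj l2 u ∨ G.Adj l3 u
  no1 : ∀ {u w}, pr u w → G.Adj l1 u → ¬ G.Adj l1 w
  no2 : ∀ {u w}, pr u w → G.Adj l2 u → ¬ G.Adj l2 w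
  no3 : ∀ {u w}, pr u w → G.Adj l3 u → ¬ G.Adj l3 w
  d1 : ∃ y, G.Adj l1 y ∧ y ≠ c
  d2 : ∃ y, G.Adj l2 y ∧ y ≠ c
  d3 : ∃ y, G.Adj l3 y ∧ y ≠ c
  sat : ∀ {y1 y2 y3}, G.Adj l1 y1 → y1 ≠ c → G.Adj l2 y2 → y2 ≠ c → G.Adj l3 y3 → y3 ≠ c →
    pr y1 y2 ∨ pr y1 y3 ∨ pr y2 y3

section
variable {pr : W → W → Prop} {c l1 l2 l3 : W}

lemma OneClaw.swap12 (O : OneClaw G pr c l1 l2 l3) : OneClaw G pr c l2 l1 l3 where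
  c1 := O.c2
  c2 := O.c1
  c3 := O.c3
  l12 := O.l12.symm
  l13 := O.l23
  l23 := O.l13
  hc y := by rw [O.hc]; tauto
  out h := by have := O.out h; tauto
  symm := O.symm
  ne := O.ne
  adj := O.adj
  right := O.right
  cov v := by have := O.cov v; tauto
  pcl h h' := by have := O.pcl h h'; tauto
  att h := by have := O.att h; tauto
  no1 := O.no2
  no2 := O.no1
  no3 := O.no3
  d1 := O.d2
  d2 := O.d1
  d3 := O.d3
  sat a1 b1 a2 b2 a3 b3 := by
    rcases O.sat a2 b2 a1 b1 a3 b3 with h | h | h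
    · exact Or.inl (O.symm h)
    · exact Or.inr (Or.inr h)
    · exact Or.inr (Or.inl h)

lemma OneClaw.swap23 (O : OneClaw G pr c l1 l2 l3) : OneClaw G pr c l1 l3 l2 where
  c1 := O.c1
  c2 := O.c3
  c3 := O.c2
  l12 := O.l13
  l13 := O.l12
  l23 := O.l23.symm
  hc y := by rw [O.hc]; tauto
  out h := by have := O.out h; tauto
  symm := O.symm
  ne := O.ne
  adj := O.adj
  right := O.right
  cov v := by have := O.cov v; tauto
  pcl h h' := by have := O.pcl h h'; tauto
  att h := by have := O.att h; tauto
  no1 := O.no1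
  no2 := O.no3
  no3 := O.no2
  d1 := O.d1
  d2 := O.d3
  d3 := O.d2
  sat a1 b1 a2 b2 a3 b3 := by
    rcases O.sat a1 b1 a3 b3 a2 b2 with h | h | h
    · exact Or.inr (Or.inl h)
    · exact Or.inl h
    · exact Or.inr (Or.inr (O.symm h))

lemma OneClaw.nl12 (O : OneClaw G pr c l1 l2 l3) : ¬ G.Adj l1 l2 := by
  intro h
  obtain ⟨y, hy, hyc⟩ := O.d3
  rcases O.sat h O.c2.symm h.symm O.c1.symm hy hyc with h | h | h
  · exact (O.out h).2.2.1 rfl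
  · exact (O.out h).2.2.1 rfl
  · exact (O.out h).2.1 rfl

lemma OneClaw.nbr1 (O : OneClaw G pr c l1 l2 l3) {y : W} (h : G.Adj l1 y) (hy : y ≠ c) :
    ∃ w, pr y w := by
  rcases O.cov y with rfl | rfl | rfl | rfl | hpr
  · exact absurd rfl hy
  · exact absurd h G.irrefl
  · exact absurd h O.nl12
  · exact absurd h O.swap23.nl12
  · exact hpr

/-- The neighbours of a vertex of a pair. -/
lemma OneClaw.pair_adj (O : OneClaw G pr c l1 l2 l3) {u w : W} (h : pr u w) (y : W) :
    G.Adj u y ↔ y = w ∨ (y = l1 ∧ G.Adj l1 u) ∨ (y = l2 ∧ G.Adj l2 u) ∨ (y = l3 ∧ G.Adj l3 u) := by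
  constructor
  · intro h'
    rcases O.pcl h h' with rfl | rfl | rfl | rfl
    · exact Or.inl rfl
    · exact Or.inr (Or.inl ⟨rfl, h'.symm⟩)
    · exact Or.inr (Or.inr (Or.inl ⟨rfl, h'.symm⟩))
    · exact Or.inr (Or.inr (Or.inr ⟨rfl, h'.symm⟩))
  · rintro (rfl | ⟨rfl, h'⟩ | ⟨rfl, h'⟩ | ⟨rfl, h'⟩)
    · exact O.adj h
    · exact h'.symm
    · exact h'.symm
    · exact h'.symm

lemma OneClaw.isoB2 (O : OneClaw G pr c l1 l2 l3) {a a' : W} (hP : pr a a')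
    (h1 : ∀ y, G.Adj l1 y ↔ y = c ∨ y = a) (h2 : ∀ y, G.Adj l2 y ↔ y = c ∨ y = a')
    (h3 : ∀ y, G.Adj l3 y ↔ y = c ∨ y = a) (hR : ∀ u w, pr u w → u = a ∨ u = a') :
    Nonempty (G ≃g graphB2) := by
  obtain ⟨p1, p2, p3, p4⟩ := O.out hP
  obtain ⟨q1, q2, q3, q4⟩ := O.out (O.symm hP)
  have hne := O.ne hP
  have c1 := O.c1
  have c2 := O.c2
  have c3 := O.c3
  have l12 := O.l12
  have l13 := O.l13
  have l23 := O.l23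
  refine iso_of _ ![l1, c, l2, a', a, l3] ?_ ?_
    ![[1, 4], [0, 2, 5], [1, 3], [2, 4], [0, 3, 5], [1, 4]] ?_ ?_
  · rw [← List.nodup_ofFn]
    simp [List.ofFn_succ, *, Ne.symm, hne.symm, c1.symm]
  · intro v
    rcases O.cov v with rfl | rfl | rfl | rfl | ⟨w, hw⟩
    · exact ⟨1, rfl⟩
    · exact ⟨0, rfl⟩
    · exact ⟨2, rfl⟩
    · exact ⟨5, rfl⟩
    · rcases hR _ _ hw with rfl | rfl
      · exact ⟨4, rfl⟩
      · exact ⟨3, rfl⟩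
  · have ha := O.pair_adj hP
    have ha' := O.pair_adj (O.symm hP)
    intro i y
    fin_cases i <;> simp [O.hc, *] <;> tauto
  · unfold graphB2
    simp only [fromRel_adj]
    decide

end


section
variable {pr : W → W → Prop} {c l1 l2 l3 : W}

lemma OneClaw.isoB4 (O : OneClaw G pr c l1 l2 l3) {a a' b b' : W} (hP : pr a a') (hQ : pr b b')
    (hab : a ≠ b) (hab' : a ≠ b') (ha'b : a' ≠ b) (ha'b' : a' ≠ b')
    (h1 : ∀ y, G.Adj l1 y ↔ y = c ∨ y = a ∨ y = b) (h2 : ∀ y, G.Adj l2 y ↔ y = c ∨ y = a')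
    (h3 : ∀ y, G.Adj l3 y ↔ y = c ∨ y = b')
    (hR : ∀ u w, pr u w → u = a ∨ u = a' ∨ u = b ∨ u = b') :
    Nonempty (G ≃g graphB4) := by
  obtain ⟨p1, p2, p3, p4⟩ := O.out hP
  obtain ⟨q1, q2, q3, q4⟩ := O.out (O.symm hP)
  obtain ⟨r1, r2, r3, r4⟩ := O.out hQ
  obtain ⟨s1, s2, s3, s4⟩ := O.out (O.symm hQ)
  have hne := O.ne hP
  have hne' := O.ne hQ
  have c1 := O.c1
  have c2 := O.c2
  have c3 := O.c3
  have l12 := O.l12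
  have l13 := O.l13
  have l23 := O.l23
  refine iso_of _ ![c, l2, a', a, l1, b, b', l3] ?_ ?_
    ![[1, 7, 4], [0, 2], [1, 3], [2, 4], [3, 5, 0], [4, 6], [5, 7], [6, 0]] ?_ ?_
  · rw [← List.nodup_ofFn]
    simp [List.ofFn_succ, *, Ne.symm, hne.symm]
  · intro v
    rcases O.cov v with rfl | rfl | rfl | rfl | ⟨w, hw⟩
    · exact ⟨0, rfl⟩
    · exact ⟨4, rfl⟩
    · exact ⟨1, rfl⟩
    · exact ⟨7, rfl⟩
    · rcases hR _ _ hw with rfl | rfl | rfl | rfl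
      · exact ⟨3, rfl⟩
      · exact ⟨2, rfl⟩
      · exact ⟨5, rfl⟩
      · exact ⟨6, rfl⟩
  · have ha := O.pair_adj hP
    have ha' := O.pair_adj (O.symm hP)
    have hb := O.pair_adj hQ
    have hb' := O.pair_adj (O.symm hQ)
    intro i y
    fin_cases i <;> simp [O.hc, *, Ne.symm] <;> tauto
  · unfold graphB4
    simp only [fromRel_adj]
    decide

lemma OneClaw.isoB5 (O : OneClaw G pr c l1 l2 l3) {a a' b b' : W} (hP : pr a a') (hQ : pr b b')
    (hab : a ≠ b) (hab' : a ≠ b') (ha'b : a' ≠ b) (ha'b' : a' ≠ b')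
    (h1 : ∀ y, G.Adj l1 y ↔ y = c ∨ y = a ∨ y = b) (h2 : ∀ y, G.Adj l2 y ↔ y = c ∨ y = a' ∨ y = b)
    (h3 : ∀ y, G.Adj l3 y ↔ y = c ∨ y = b')
    (hR : ∀ u w, pr u w → u = a ∨ u = a' ∨ u = b ∨ u = b') :
    Nonempty (G ≃g graphB5) := by
  obtain ⟨p1, p2, p3, p4⟩ := O.out hP
  obtain ⟨q1, q2, q3, q4⟩ := O.out (O.symm hP)
  obtain ⟨r1, r2, r3, r4⟩ := O.out hQ
  obtain ⟨s1, s2, s3, s4⟩ := O.out (O.symm hQ)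
  have hne := O.ne hP
  have hne' := O.ne hQ
  have c1 := O.c1
  have c2 := O.c2
  have c3 := O.c3
  have l12 := O.l12
  have l13 := O.l13
  have l23 := O.l23
  refine iso_of _ ![c, l2, a', a, l1, b, b', l3] ?_ ?_
    ![[1, 7, 4], [0, 2, 5], [1, 3], [2, 4], [3, 5, 0], [4, 6, 1], [5, 7], [6, 0]] ?_ ?_
  · rw [← List.nodup_ofFn]
    simp [List.ofFn_succ, *, Ne.symm, hne.symm]
  · intro v
    rcases O.cov v with rfl | rfl | rfl | rfl | ⟨w, hw⟩
    · exact ⟨0, rfl⟩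
    · exact ⟨4, rfl⟩
    · exact ⟨1, rfl⟩
    · exact ⟨7, rfl⟩
    · rcases hR _ _ hw with rfl | rfl | rfl | rfl
      · exact ⟨3, rfl⟩
      · exact ⟨2, rfl⟩
      · exact ⟨5, rfl⟩
      · exact ⟨6, rfl⟩
  · have ha := O.pair_adj hP
    have ha' := O.pair_adj (O.symm hP)
    have hb := O.pair_adj hQ
    have hb' := O.pair_adj (O.symm hQ)
    intro i y
    fin_cases i <;> simp [O.hc, *, Ne.symm] <;> tauto
  · unfold graphB5
    simp only [fromRel_adj]
    decide

end


section
variable {pr : W → W → Prop} {c l1 l2 l3 : W}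

/-- The first leaf has two private neighbours. -/
lemma OneClaw.two (O : OneClaw G pr c l1 l2 l3) {a a' b : W} (hP : pr a a') (h1a : G.Adj l1 a)
    (h2a : G.Adj l2 a') (h1b : G.Adj l1 b) (hba : b ≠ a) (hbc : b ≠ c) :
    Nonempty (G ≃g graphB4) ∨ Nonempty (G ≃g graphB5) := by
  obtain ⟨b', hQ⟩ := O.nbr1 h1b hbc
  have hP' := O.symm hP
  have hQ' := O.symm hQ
  have hac := (O.out hP).1
  have ha'c := (O.out hP').1
  have hb'c := (O.out hQ').1
  have hba' : b ≠ a' := by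
    rintro rfl
    exact O.no1 hP h1a h1b
  have hb'a : b' ≠ a := by
    rintro rfl
    exact hba' (O.right hQ' hP)
  have hb'a' : b' ≠ a' := by
    rintro rfl
    exact hba (O.right hQ' hP')
  have hN3 : ∀ y, G.Adj l3 y → y ≠ c → y = b' ∨ y = a := by
    intro y hy hyc
    rcases O.sat h1b hbc h2a ha'c hy hyc with h | h | h
    · exact absurd (O.right hQ h) hb'a'
    · exact Or.inl (O.right h hQ)
    · exact Or.inr (O.right h hP')
  have h3b : G.Adj l3 b' := by
    by_contra h3b
    have h3a : G.Adj l3 a := by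
      obtain ⟨y, hy, hyc⟩ := O.d3
      rcases hN3 y hy hyc with rfl | rfl
      · exact absurd hy h3b
      · exact hy
    have h2b : G.Adj l2 b' := by
      rcases O.att hQ' with h | h | h
      · exact absurd h (O.no1 hQ h1b)
      · exact h
      · exact absurd h h3b
    rcases O.sat h1a hac h2b hb'c h3a hac with h | h | h
    · exact hb'a' (O.right h hP)
    · exact O.ne h rfl
    · exact hba (O.right hQ' h)
  have hN2 : ∀ y, G.Adj l2 y → y ≠ c → y = a' ∨ y = b := by
    intro y hy hyc
    rcases O.sat h1a hac hy hyc h3b hb'c with h | h | h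
    · exact Or.inl (O.right h hP)
    · exact absurd (O.right h hP) hb'a'
    · exact Or.inr (O.right (O.symm h) hQ')
  have hN1 : ∀ y, G.Adj l1 y → y ≠ c → y = a ∨ y = b := by
    intro y hy hyc
    rcases O.sat hy hyc h2a ha'c h3b hb'c with h | h | h
    · exact Or.inl (O.right (O.symm h) hP')
    · exact Or.inr (O.right (O.symm h) hQ')
    · exact absurd (O.right h hP') hb'a
  have hR : ∀ u w, pr u w → u = a ∨ u = a' ∨ u = b ∨ u = b' := by
    intro u w huw
    have huc := (O.out huw).1
    rcases O.att huw with h | h | h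
    · rcases hN1 u h huc with h | h
      · exact Or.inl h
      · exact Or.inr (Or.inr (Or.inl h))
    · rcases hN2 u h huc with h | h
      · exact Or.inr (Or.inl h)
      · exact Or.inr (Or.inr (Or.inl h))
    · rcases hN3 u h huc with h | h
      · exact Or.inr (Or.inr (Or.inr h))
      · exact Or.inl h
  have hc1 : G.Adj l1 c := ((O.hc l1).2 (Or.inl rfl)).symm
  have hc2 : G.Adj l2 c := ((O.hc l2).2 (Or.inr (Or.inl rfl))).symm
  have hc3 : G.Adj l3 c := ((O.hc l3).2 (Or.inr (Or.inr rfl))).symm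
  have H1 : ∀ y, G.Adj l1 y ↔ y = c ∨ y = a ∨ y = b := by
    intro y
    constructor
    · intro h
      by_cases hy : y = c
      · exact Or.inl hy
      · exact Or.inr (hN1 y h hy)
    · rintro (rfl | rfl | rfl) <;> assumption
  have H2 : ∀ y, G.Adj l2 y ↔ y = c ∨ y = a' ∨ (y = b ∧ G.Adj l2 b) := by
    intro y
    constructor
    · intro h
      by_cases hy : y = c
      · exact Or.inl hy
      · rcases hN2 y h hy with rfl | rfl
        · exact Or.inr (Or.inl rfl)
        · exact Or.inr (Or.inr ⟨rfl, h⟩)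
    · rintro (rfl | rfl | ⟨rfl, h⟩) <;> assumption
  have H3 : ∀ y, G.Adj l3 y ↔ y = c ∨ y = b' ∨ (y = a ∧ G.Adj l3 a) := by
    intro y
    constructor
    · intro h
      by_cases hy : y = c
      · exact Or.inl hy
      · rcases hN3 y h hy with rfl | rfl
        · exact Or.inr (Or.inl rfl)
        · exact Or.inr (Or.inr ⟨rfl, h⟩)
    · rintro (rfl | rfl | ⟨rfl, h⟩) <;> assumption
  by_cases h2b : G.Adj l2 b
  · by_cases h3a : G.Adj l3 a
    · exfalso
      rcases O.sat h1a hac h2b hbc h3a hac with h | h | h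
      · exact hba' (O.right h hP)
      · exact O.ne h rfl
      · exact hb'a (O.right hQ h)
    · right
      refine O.isoB5 hP hQ hba.symm hb'a.symm hba'.symm hb'a'.symm H1 ?_ ?_ hR
      · simpa [h2b] using H2
      · simpa [h3a] using H3
  · by_cases h3a : G.Adj l3 a
    · right
      refine O.swap23.isoB5 hQ hP hba hba' hb'a hb'a' ?_ ?_ ?_ ?_
      · intro y
        rw [H1]
        tauto
      · simpa [h3a] using H3
      · simpa [h2b] using H2
      · intro u w h
        have := hR u w h
        tauto
    · left
      refine O.isoB4 hP hQ hba.symm hb'a.symm hba'.symm hb'a'.symm H1 ?_ ?_ hR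
      · simpa [h2b] using H2
      · simpa [h3a] using H3

lemma OneClaw.fin' (O : OneClaw G pr c l1 l2 l3) {a a' : W} (hP : pr a a') (h1a : G.Adj l1 a)
    (h2a : G.Adj l2 a') :
    Nonempty (G ≃g graphB2) ∨ Nonempty (G ≃g graphB4) ∨ Nonempty (G ≃g graphB5) := by
  by_cases hb : ∃ b, G.Adj l1 b ∧ b ≠ a ∧ b ≠ c
  · obtain ⟨b, h1, h2, h3⟩ := hb
    exact Or.inr (O.two hP h1a h2a h1 h2 h3)
  by_cases hb' : ∃ b, G.Adj l2 b ∧ b ≠ a' ∧ b ≠ c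
  · obtain ⟨b, h1, h2, h3⟩ := hb'
    exact Or.inr (O.swap12.two (O.symm hP) h2a h1a h1 h2 h3)
  push Not at hb hb'
  have hP' := O.symm hP
  have hac := (O.out hP).1
  have ha'c := (O.out hP').1
  have hR : ∀ u w, pr u w → u = a ∨ u = a' := by
    intro u w huw
    by_contra hcon
    push Not at hcon
    have huc := (O.out huw).1
    have hwu := O.symm huw
    have hwc := (O.out hwu).1
    have hw : w ≠ a ∧ w ≠ a' := by
      constructor
      · rintro rfl
        exact hcon.2 (O.right hwu hP)
      · rintro rfl
        exact hcon.1 (O.right hwu hP')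
    have h3 : ∀ v z, pr v z → v ≠ a → v ≠ a' → G.Adj l3 v := by
      intro v z hvz hva hva'
      have hvc := (O.out hvz).1
      rcases O.att hvz with h | h | h
      · exact absurd (hb v h hva) hvc
      · exact absurd (hb' v h hva') hvc
      · exact h
    exact O.no3 huw (h3 u w huw hcon.1 hcon.2) (h3 w u hwu hw.1 hw.2)
  have hc1 : G.Adj l1 c := ((O.hc l1).2 (Or.inl rfl)).symm
  have hc2 : G.Adj l2 c := ((O.hc l2).2 (Or.inr (Or.inl rfl))).symm
  have hc3 : G.Adj l3 c := ((O.hc l3).2 (Or.inr (Or.inr rfl))).symm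
  have H1 : ∀ y, G.Adj l1 y ↔ y = c ∨ y = a := by
    intro y
    constructor
    · intro h
      by_cases hy : y = a
      · exact Or.inr hy
      · exact Or.inl (hb y h hy)
    · rintro (rfl | rfl) <;> assumption
  have H2 : ∀ y, G.Adj l2 y ↔ y = c ∨ y = a' := by
    intro y
    constructor
    · intro h
      by_cases hy : y = a'
      · exact Or.inr hy
      · exact Or.inl (hb' y h hy)
    · rintro (rfl | rfl) <;> assumption
  have hN3 : ∀ y, G.Adj l3 y → y ≠ c → y = a ∨ y = a' := by
    intro y hy hyc
    obtain ⟨w, hw⟩ := O.swap23.swap12.nbr1 hy hyc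
    exact hR y w hw
  left
  by_cases h3a : G.Adj l3 a
  · refine O.isoB2 hP H1 H2 ?_ hR
    intro y
    constructor
    · intro h
      by_cases hy : y = c
      · exact Or.inl hy
      · rcases hN3 y h hy with rfl | rfl
        · exact Or.inr rfl
        · exact absurd h (O.no3 hP h3a)
    · rintro (rfl | rfl) <;> assumption
  · have h3a' : G.Adj l3 a' := by
      obtain ⟨y, hy, hyc⟩ := O.d3
      rcases hN3 y hy hyc with rfl | rfl
      · exact absurd hy h3a
      · exact hy
    refine O.swap12.isoB2 hP' H2 H1 ?_ (fun u w h => (hR u w h).symm)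
    intro y
    constructor
    · intro h
      by_cases hy : y = c
      · exact Or.inl hy
      · rcases hN3 y h hy with rfl | rfl
        · exact absurd h h3a
        · exact Or.inr rfl
    · rintro (rfl | rfl) <;> assumption

lemma OneClaw.fin (O : OneClaw G pr c l1 l2 l3) :
    Nonempty (G ≃g graphB2) ∨ Nonempty (G ≃g graphB4) ∨ Nonempty (G ≃g graphB5) := by
  obtain ⟨y1, h1, h1'⟩ := O.d1
  obtain ⟨y2, h2, h2'⟩ := O.d2
  obtain ⟨y3, h3, h3'⟩ := O.d3
  rcases O.sat h1 h1' h2 h2' h3 h3' with h | h | h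
  · exact O.fin' h h1 h2
  · exact O.swap23.fin' h h1 h3
  · exact O.swap12.swap23.fin' h h2 h3

end

lemma Ctx.oneClaw (C : Ctx G m x PP) (i0 : Fin m) (h0 : ∀ j, j = i0) :
    OneClaw G (fun u w => {u, w} ∈ PP) (x i0 0) (x i0 1) (x i0 2) (x i0 3) := by
  have hne : ∀ k l : Fin 4, k ≠ l → x i0 k ≠ x i0 l := fun k l h h' =>
    h (C.star.1 _ _ _ _ h').2
  have hout : ∀ {u w : W}, {u, w} ∈ PP → ∀ k, u ≠ x i0 k := fun h k hk =>
    C.not_mem h (by simp) (mem_starX.2 ⟨i0, k, hk.symm⟩)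
  have hsymm : ∀ {u w : W}, {u, w} ∈ PP → {w, u} ∈ PP := fun h => by
    rw [Finset.pair_comm]; exact h
  have hX : ∀ v, v ∈ starX x → v = x i0 0 ∨ v = x i0 1 ∨ v = x i0 2 ∨ v = x i0 3 := by
    intro v hv
    obtain ⟨j, k, rfl⟩ := mem_starX.1 hv
    rw [h0 j]
    fin_cases k <;> simp
  have hmate : ∀ {u w : W}, {u, w} ∈ PP → u ≠ w ∧ G.Adj u w ∧
      (∃ i k, G.Adj u (x i k)) ∧ ∃ j l, G.Adj w (x j l) := by
    intro u w h
    obtain ⟨w', h', hm⟩ := C.mate (C.not_mem h (u := u) (by simp))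
    rw [C.pair_right h h']
    exact hm
  have hno : ∀ {u w : W}, {u, w} ∈ PP → ∀ k, G.Adj (x i0 k) u → ¬ G.Adj (x i0 k) w :=
    fun h k h1 h2 => (C.compat h h1.symm h2.symm).2.2.2 rfl
  have hu0 : ∀ {u w : W}, {u, w} ∈ PP → ¬ G.Adj u (x i0 0) := by
    intro u w h ha
    obtain ⟨-, -, -, j, l, hj⟩ := hmate h
    exact (C.compat h ha hj).2.1 rfl
  exact
  { c1 := hne _ _ (by decide)
    c2 := hne _ _ (by decide)
    c3 := hne _ _ (by decide)
    l12 := hne _ _ (by decide)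
    l13 := hne _ _ (by decide)
    l23 := hne _ _ (by decide)
    hc := by
      intro y
      constructor
      · intro h
        obtain ⟨k, rfl⟩ := C.center i0 h
        fin_cases k
        · exact Or.inl rfl
        · exact Or.inr (Or.inl rfl)
        · exact Or.inr (Or.inr rfl)
      · rintro (rfl | rfl | rfl)
        · exact C.star.2 i0 0
        · exact C.star.2 i0 1
        · exact C.star.2 i0 2
    out := fun h => ⟨hout h 0, hout h 1, hout h 2, hout h 3⟩
    symm := hsymm
    ne := fun h => C.ne_of_pair h
    adj := fun h => (hmate h).2.1
    right := fun h h' => C.pair_right h h'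
    cov := by
      intro v
      by_cases hv : v ∈ starX x
      · rcases hX v hv with h | h | h | h
        · exact Or.inl h
        · exact Or.inr (Or.inl h)
        · exact Or.inr (Or.inr (Or.inl h))
        · exact Or.inr (Or.inr (Or.inr (Or.inl h)))
      · obtain ⟨w, hw, -⟩ := C.mate hv
        exact Or.inr (Or.inr (Or.inr (Or.inr ⟨w, hw⟩)))
    pcl := by
      intro u w z h ha
      by_cases hz : z ∈ starX x
      · rcases hX z hz with rfl | h | h | h
        · exact absurd ha (hu0 h)
        · exact Or.inr (Or.inl h)
        · exact Or.inr (Or.inr (Or.inl h))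
        · exact Or.inr (Or.inr (Or.inr h))
      · have := C.pcl _ h u (by simp) z (by simpa using hz) ha
        simp only [Finset.mem_insert, Finset.mem_singleton] at this
        rcases this with rfl | rfl
        · exact absurd ha G.irrefl
        · exact Or.inl rfl
    att := by
      intro u w h
      obtain ⟨-, -, ⟨i, k, hk⟩, -⟩ := hmate h
      rcases hX _ (mem_starX.2 ⟨i, k, rfl⟩) with e | e | e | e <;> rw [e] at hk
      · exact absurd hk (hu0 h)
      · exact Or.inl hk.symm
      · exact Or.inr (Or.inl hk.symm)
      · exact Or.inr (Or.inr hk.symm)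
    no1 := fun h => hno h 1
    no2 := fun h => hno h 2
    no3 := fun h => hno h 3
    d1 := C.hd _ _
    d2 := C.hd _ _
    d3 := C.hd _ _
    sat := by
      intro y1 y2 y3 a1 b1 a2 b2 a3 b3
      exact C.sat3 i0 (k1 := 0) (k2 := 1) (k3 := 2) (by decide) (by decide) (by decide)
        a1 b1 a2 b2 a3 b3 }


/-! ## No claw -/

/-- The positions of the chosen vertices on a cycle. -/
def cpatt (k i : ℕ) : Prop := patt k i ∨ (k % 3 = 2 ∧ i = 0)

instance (k i : ℕ) : Decidable (cpatt k i) := by unfold cpatt; infer_instance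

lemma cycle_step {k i : ℕ} (hk : 4 ≤ k) (hi : i < k) (h : ¬ cpatt k i) :
    (cpatt k (if i + 1 < k then i + 1 else 0) ∧ ¬ cpatt k (if i = 0 then k - 1 else i - 1)) ∨
    (cpatt k (if i = 0 then k - 1 else i - 1) ∧ ¬ cpatt k (if i + 1 < k then i + 1 else 0)) := by
  unfold cpatt patt at *
  have hi3 : i % 3 = 0 ∨ i % 3 = 1 ∨ i % 3 = 2 := by omega
  have hk3 : k % 3 = 0 ∨ k % 3 = 1 ∨ k % 3 = 2 := by omega
  rcases hi3 with hi3 | hi3 | hi3 <;> rcases hk3 with hk3 | hk3 | hk3 <;> split_ifs <;>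
    first
    | (exfalso; omega)
    | (left; constructor <;> omega)
    | (right; constructor <;> omega)
    | (left; constructor <;> grind)
    | (right; constructor <;> grind)

lemma no_claw (hn : 4 ≤ Fintype.card W) (h2 : MaxTwo G (Finset.univ : Finset W))
    (hmin : ∀ S, GoodSet G S → Fintype.card W ≤ 2 * S.card) (heven : Even (Fintype.card W))
    (hd : ∀ v u : W, ∃ w, G.Adj v w ∧ w ≠ u)
    (hcl : ∀ A : Finset W, A.Nonempty → (∀ v ∈ A, ∀ w, G.Adj v w → w ∈ A) → ∀ v, v ∈ A) :
    Nonempty (G ≃g cycleGraph 4) ∨ Nonempty (G ≃g cycleGraph 8) := by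
  have hne : (Finset.univ : Finset W).Nonempty := by
    rw [Finset.univ_nonempty_iff, ← Fintype.card_pos_iff]; omega
  obtain ⟨k, p, hk, ⟨-, hinj, hadj⟩, hclo, h0, -⟩ := exists_longest hne h2
  have hall : ∀ v, ∃ i < k, p i = v := by
    have h := hcl ((Finset.range k).image p) ⟨p 0, Finset.mem_image.2 ⟨0, by simp; omega, rfl⟩⟩ (by
      intro v hv w hvw
      obtain ⟨i, hi, rfl⟩ := Finset.mem_image.1 hv
      obtain ⟨j, hj, rfl⟩ := hclo i (by simpa using hi) w (Finset.mem_univ _) hvw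
      exact Finset.mem_image.2 ⟨j, by simpa using hj, rfl⟩)
    intro v
    obtain ⟨i, hi, h⟩ := Finset.mem_image.1 (h v)
    exact ⟨i, by simpa using hi, h⟩
  have hcard : Fintype.card W = k := by
    have h1 : (Finset.range k).image p = Finset.univ := by
      ext v
      obtain ⟨i, hi, rfl⟩ := hall v
      simp only [Finset.mem_image, Finset.mem_range, Finset.mem_univ, iff_true]
      exact ⟨i, hi, rfl⟩
    rw [← Finset.card_univ, ← h1, Finset.card_image_of_injOn, Finset.card_range]
    intro i hi j hj hij
    exact hinj i (by simpa using hi) j (by simpa using hj) hij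
  rw [hcard] at hn heven hmin
  have hlast : G.Adj (p (k - 1)) (p 0) := by
    obtain ⟨w, hw, hw1⟩ := hd (p 0) (p 1)
    rcases h0 w (Finset.mem_univ _) hw with ⟨-, rfl⟩ | ⟨-, rfl⟩
    · exact absurd rfl hw1
    · exact hw.symm
  have hs : ∀ i < k, G.Adj (p i) (p (if i + 1 < k then i + 1 else 0)) := by
    intro i hi
    split_ifs with h
    · exact hadj i h
    · have : i = k - 1 := by omega
      rw [this]; exact hlast
  have ht : ∀ i < k, G.Adj (p i) (p (if i = 0 then k - 1 else i - 1)) := by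
    intro i hi
    split_ifs with h
    · rw [h]; exact hlast.symm
    · have := (hadj (i - 1) (by omega)).symm
      rwa [Nat.sub_add_cancel (by omega)] at this
  have hN : ∀ i < k, ∀ y, G.Adj (p i) y ↔ y = p (if i + 1 < k then i + 1 else 0) ∨
      y = p (if i = 0 then k - 1 else i - 1) := by
    intro i hi y
    constructor
    · intro h
      rcases h2 (p i) (Finset.mem_univ _) y (Finset.mem_univ _) _ (Finset.mem_univ _) _
        (Finset.mem_univ _) h (hs i hi) (ht i hi) with h | h | h
      · exact Or.inl h
      · exact Or.inr h
      · exfalso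
        have := hinj _ (by split_ifs <;> omega) _ (by split_ifs <;> omega) h
        split_ifs at this <;> omega
    · rintro (rfl | rfl)
      · exact hs i hi
      · exact ht i hi
  set S : Finset W := ((Finset.range k).filter (cpatt k)).image p with hS
  have hmS : ∀ i < k, (p i ∈ S ↔ cpatt k i) := by
    intro i hi
    rw [hS, Finset.mem_image]
    constructor
    · rintro ⟨j, hj, hji⟩
      rw [Finset.mem_filter, Finset.mem_range] at hj
      rw [← hinj j hj.1 i hi hji]
      exact hj.2
    · intro h
      exact ⟨i, Finset.mem_filter.2 ⟨Finset.mem_range.2 hi, h⟩, rfl⟩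
  have hgood : GoodSet G S := by
    intro v hv
    obtain ⟨i, hi, rfl⟩ := hall v
    rw [hmS i hi] at hv
    have b1 : (if i + 1 < k then i + 1 else 0) < k := by split_ifs <;> omega
    have b2 : (if i = 0 then k - 1 else i - 1) < k := by split_ifs <;> omega
    rcases cycle_step hn hi hv with ⟨h1, h2⟩ | ⟨h1, h2⟩
    · exact ⟨⟨_, (hmS _ b1).2 h1, hs i hi⟩, Or.inl ⟨_, fun h => h2 ((hmS _ b2).1 h), ht i hi⟩⟩
    · exact ⟨⟨_, (hmS _ b2).2 h1, ht i hi⟩, Or.inl ⟨_, fun h => h2 ((hmS _ b1).1 h), hs i hi⟩⟩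
  have hc1 := hmin S hgood
  have hc2 : S.card ≤ ((Finset.range k).filter (cpatt k)).card := Finset.card_image_le
  have hc3 : ((Finset.range k).filter (cpatt k)).card ≤ (k + 2) / 3 + if k % 3 = 2 then 1 else 0 := by
    split_ifs with h
    · have : (Finset.range k).filter (cpatt k) ⊆ insert 0 ((Finset.range k).filter (patt k)) := by
        intro i hi
        rw [Finset.mem_filter] at hi
        rw [Finset.mem_insert, Finset.mem_filter]
        rcases hi.2 with h | h
        · exact Or.inr ⟨hi.1, h⟩
        · exact Or.inl h.2
      exact (Finset.card_le_card this).trans ((Finset.card_insert_le _ _).trans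
        (Nat.succ_le_succ (patt_card k)))
    · have : (Finset.range k).filter (cpatt k) ⊆ (Finset.range k).filter (patt k) := by
        intro i hi
        rw [Finset.mem_filter] at hi ⊢
        rcases hi.2 with h' | h'
        · exact ⟨hi.1, h'⟩
        · exact absurd h'.1 h
      exact (Finset.card_le_card this).trans (patt_card k)
  have hk48 : k = 4 ∨ k = 8 := by
    obtain ⟨r, hr⟩ := heven
    split_ifs at hc3 <;> omega
  rcases hk48 with rfl | rfl
  · left
    refine iso_of _ (fun i : Fin 4 => p i) ?_ ?_ ![[1, 3], [2, 0], [3, 1], [0, 2]] ?_ ?_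
    · intro i j hij
      exact Fin.ext (hinj _ i.2 _ j.2 hij)
    · intro v
      obtain ⟨i, hi, rfl⟩ := hall v
      exact ⟨⟨i, hi⟩, rfl⟩
    · intro i y
      rw [hN i i.2 y]
      fin_cases i <;> simp
    · decide
  · right
    refine iso_of _ (fun i : Fin 8 => p i) ?_ ?_
      ![[1, 7], [2, 0], [3, 1], [4, 2], [5, 3], [6, 4], [7, 5], [0, 6]] ?_ ?_
    · intro i j hij
      exact Fin.ext (hinj _ i.2 _ j.2 hij)
    · intro v
      obtain ⟨i, hi, rfl⟩ := hall v
      exact ⟨⟨i, hi⟩, rfl⟩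
    · intro i y
      rw [hN i i.2 y]
      fin_cases i <;> simp
    · decide


end ntdproof

theorem stmt7 [Fintype V] (G : SimpleGraph V) [DecidableRel G.Adj]
    (hconn : G.Connected) (hn : 4 ≤ Fintype.card V)
    (hdeg : ∀ v : V, 2 ≤ G.degree v)
    (hC5 : ¬ Nonempty (G ≃g cycleGraph 5))
    (h : 2 * ntdNum G = Fintype.card V) :
    Nonempty (G ≃g cycleGraph 4) ∨ Nonempty (G ≃g graphB2) ∨
    Nonempty (G ≃g cycleGraph 8) ∨ Nonempty (G ≃g graphB4) ∨
    Nonempty (G ≃g graphB5) := by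
  classical
  have hd : ∀ v u : V, ∃ w, G.Adj v w ∧ w ≠ u := by
    intro v u
    have h1 : 1 < (G.neighborFinset v).card := by
      have := hdeg v
      rw [← SimpleGraph.card_neighborFinset_eq_degree] at this
      omega
    obtain ⟨w, hw, hwu⟩ := Finset.exists_mem_ne h1 u
    exact ⟨w, by simpa using hw, hwu⟩
  have hcl : ∀ A : Finset V, A.Nonempty → (∀ v ∈ A, ∀ w, G.Adj v w → w ∈ A) → ∀ v, v ∈ A := by
    intro A hA hA' v
    obtain ⟨u, hu⟩ := hA
    obtain ⟨p⟩ := hconn.preconnected u v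
    induction p with
    | nil => exact hu
    | cons hadj p ih => exact ih (hA' _ hu _ hadj)
  have hmin : ∀ S : Finset V, GoodSet G S → Fintype.card V ≤ 2 * S.card := by
    intro S hS
    have := hS.le
    omega
  obtain ⟨m, x, hstar, hmax⟩ := exists_stars G
  rcases Nat.eq_zero_or_pos m with rfl | hm
  · have hX : Finset.univ \ starX x = (Finset.univ : Finset V) := by
      ext v
      simp [mem_starX]
    rw [hX] at hmax
    rcases no_claw hn hmax hmin ⟨ntdNum G, by omega⟩ hd hcl with h | h
    · exact Or.inl h
    · exact Or.inr (Or.inr (Or.inl h))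
  · obtain ⟨PP, hdis, hcov, hok, hpcl⟩ := decomp (X := starX x) (R := Finset.univ \ starX x)
      ⟨x ⟨0, hm⟩ 0, mem_starX.2 ⟨_, _, rfl⟩⟩ (by simp) hmax hd hcl _ (Finset.univ \ starX x)
      (Finset.Subset.refl _) le_rfl (fun v _ w hw _ => hw)
    have C : Ctx G m x PP := ⟨hstar, hmin, hdis, hcov, hok, hpcl, hd, hcl⟩
    have hone : ∀ j : Fin m, j = ⟨0, hm⟩ := by
      intro j
      by_contra hj
      exact C.one hj
    rcases (C.oneClaw _ hone).fin with h | h | h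
    · exact Or.inr (Or.inl h)
    · exact Or.inr (Or.inr (Or.inr (Or.inl h)))
    · exact Or.inr (Or.inr (Or.inr (Or.inr h)))
end
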